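/- arXiv:1404.1952 — 4 statements merged into one kernel-verified Lean document; each statement's English description precedes it below -/
import Mathlib

section
/- Let K be a field equipped with a nonarchimedean absolute value |·|, with the norm of a tuple defined as the maximum of the norms of its coordinates. Fix positive integers m, r, μ satisfying D_m(r−1) ≤ μ < D_m(r), and a real number ρ with 0 < ρ ≤ 1. Let x_1, …, x_μ be points of K^m with ‖x_j − x_1‖ ≤ ρ for all j. Suppose that for each i ∈ {1,…,μ} we are given values ψ_i(x_j) ∈ K for 1 ≤ j ≤ μ together with scalars c_{i,α} ∈ K for multi-indices α ∈ ℕ^m with |α| ≤ r−1, such that |c_{i,α}| ≤ 1 for all α, and for every j, |ψ_i(x_j) − Σ_{|α|≤r−1} c_{i,α}(x_j − x_1)^α| ≤ ρ^r. Then the determinant Δ = det(ψ_i(x_j))_{1≤i,j≤μ} satisfies |Δ| ≤ ρ^e, where e = Σ_{k=0}^{r−1} k·L_m(k) + r·(μ − D_m(r−1)). -/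
/-!
The matrix `ψ` factors as `A * B`, where `A = [C | 1]` collects the Taylor coefficients together
with an identity block, and the rows of `B` are the monomials `(x_j - x_1)^α`, `|α| ≤ r - 1`,
followed by the remainders. All entries of `A` have norm at most `1`, and a row of `B` has entries
of norm at most `ρ ^ w`, where its weight `w` is `|α|` for a monomial and `r` for a remainder.

Expanding `det (A * B)` by multilinearity in the rows gives a sum, over maps `f` from row indices of
`ψ` to row indices of `B`, of an integral scalar times the determinant of the rows of `B` picked
by `f`. Only injective `f` contribute, and such a term has norm at most `ρ ^ ∑ i, w (f i)`; since the
absolute value is nonarchimedean it remains to bound `∑ i, w (f i)` from below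
(`det_factor_le`). The deficits `r - w` are nonnegative and vanish on the remainders, so for
injective `f` they add up to at most `∑_α (r - |α|)`; counting the multi-indices of each degree
turns this into the stated exponent (`exponent_le`).
-/

open Finset

/-- The finset of multi-indices `α ∈ ℕ^m` with `|α| ≤ r - 1`
(the set `Δ_m(r-1)` of the paper). -/
def multiIdx (m r : ℕ) : Finset (Fin m → ℕ) :=
  (Fintype.piFinset fun _ => Finset.range r).filter fun α => ∑ i, α i ≤ r - 1

/-- The ultrametric inequality for finite sums; `0 ≤ C` takes care of the empty sum. -/
lemma nonarch_sum_le {K β : Type*} [Field K] (v : AbsoluteValue K ℝ)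
    (hna : IsNonarchimedean fun x => v x) (s : Finset β) (g : β → K) {C : ℝ} (hC : 0 ≤ C)
    (h : ∀ b ∈ s, v (g b) ≤ C) : v (∑ b ∈ s, g b) ≤ C := by
  refine Finset.sum_induction g (fun y => v y ≤ C) ?_ ?_ h
  · intro a b ha hb
    exact (hna a b).trans (max_le ha hb)
  · simpa using hC

/-- A matrix whose `i`-th row has entries of norm at most `b i` has determinant of norm at most
`∏ i, b i`. -/
lemma nonarch_det_le {K ι : Type*} [Field K] [Fintype ι] [DecidableEq ι] (v : AbsoluteValue K ℝ)
    (hna : IsNonarchimedean fun x => v x) (M : Matrix ι ι K) (b : ι → ℝ)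
    (h : ∀ i j, v (M i j) ≤ b i) : v M.det ≤ ∏ i, b i := by
  have hb : ∀ i, 0 ≤ b i := fun i => (v.nonneg _).trans (h i i)
  rw [← Matrix.det_transpose, Matrix.det_apply']
  refine nonarch_sum_le v hna _ _ (Finset.prod_nonneg fun i _ => hb i) fun σ _ => ?_
  have hs : v ((Equiv.Perm.sign σ : ℤ) : K) = 1 := by
    rcases Int.units_eq_one_or (Equiv.Perm.sign σ) with h | h <;> simp [h]
  rw [map_mul, hs, one_mul, map_prod]
  exact Finset.prod_le_prod (fun i _ => v.nonneg _) fun i _ => h i (σ i)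

/-- Determinant bound for a product `A * B` of rectangular matrices, with `A` integral and the
`n`-th row of `B` of size `ρ ^ w n`: the exponent is any lower bound for the total weight of a
choice of distinct rows of `B`. -/
lemma det_factor_le {K ι N : Type*} [Field K] [Fintype ι] [DecidableEq ι] [Fintype N]
    (v : AbsoluteValue K ℝ) (hna : IsNonarchimedean fun x => v x)
    (A : Matrix ι N K) (B : Matrix N ι K) (w : N → ℕ) {ρ : ℝ} (hρ₀ : 0 ≤ ρ) (hρ₁ : ρ ≤ 1)
    (hA : ∀ i n, v (A i n) ≤ 1) (hB : ∀ n j, v (B n j) ≤ ρ ^ w n) (e : ℕ)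
    (he : ∀ f : ι → N, Function.Injective f → e ≤ ∑ i, w (f i)) :
    v (A * B).det ≤ ρ ^ e := by
  have key : (A * B).det = ∑ f : ι → N, (∏ i, A i (f i)) * (B.submatrix f id).det := by
    have h1 : (A * B) = fun i => ∑ n, A i n • B n := by
      ext i j
      simp [Matrix.mul_apply]
    change Matrix.detRowAlternating (A * B) = _
    rw [h1]
    change Matrix.detRowAlternating.toMultilinearMap _ = _
    rw [MultilinearMap.map_sum]
    refine Finset.sum_congr rfl fun f _ => ?_
    rw [MultilinearMap.map_smul_univ]
    rfl
  rw [key]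
  refine nonarch_sum_le v hna _ _ (by positivity) fun f _ => ?_
  by_cases hf : Function.Injective f
  · rw [map_mul, map_prod]
    have h1 : ∏ i, v (A i (f i)) ≤ 1 :=
      Finset.prod_le_one (fun i _ => v.nonneg _) fun i _ => hA i (f i)
    have h2 : v (B.submatrix f id).det ≤ ∏ i, ρ ^ w (f i) :=
      nonarch_det_le v hna _ _ fun i j => hB (f i) j
    rw [Finset.prod_pow_eq_pow_sum] at h2
    calc _ ≤ 1 * ρ ^ (∑ i, w (f i)) := mul_le_mul h1 h2 (v.nonneg _) zero_le_one
      _ ≤ ρ ^ e := by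
        rw [one_mul]
        exact pow_le_pow_of_le_one hρ₀ hρ₁ (he f hf)
  · have : (B.submatrix f id).det = 0 := by
      rw [Function.Injective] at hf
      push Not at hf
      obtain ⟨i, j, hij, hne⟩ := hf
      exact Matrix.det_zero_of_row_eq hne (by ext k; simp [hij])
    rw [this, mul_zero, map_zero]
    positivity

/-- Stars and bars: there are `L_m(k)` multi-indices of degree `k`. -/
lemma card_multiIdx_fiber {m r k : ℕ} (hm : 0 < m) (hk : k < r) :
    ((multiIdx m r).filter fun α => ∑ i, α i = k).card = (k + m - 1).choose (m - 1) := by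
  letI : Fintype {P : Fin m → ℕ // ∑ i, P i = k} :=
    Fintype.ofEquiv _ (Sym.equivNatSumOfFintype (Fin m) k)
  have h := Fintype.card_congr (Sym.equivNatSumOfFintype (Fin m) k)
  rw [Sym.card_sym_eq_choose, Fintype.card_fin] at h
  have h2 : (k + m - 1).choose (m - 1) = (m + k - 1).choose k := by
    rw [show m + k - 1 = k + m - 1 by omega]
    exact Nat.choose_symm_of_eq_add (by omega)
  rw [h2, h]
  symm
  refine Fintype.card_of_subtype _ fun α => ?_
  simp only [multiIdx, Finset.mem_filter, Fintype.mem_piFinset, Finset.mem_range]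
  refine ⟨fun h => h.2, fun h => ⟨⟨fun i => ?_, by omega⟩, h⟩⟩
  have := Finset.single_le_sum (f := α) (fun _ _ => Nat.zero_le _) (Finset.mem_univ i)
  omega

/-- Summing over multi-indices of degree below `r` a function of the degree only. -/
lemma sum_multiIdx {m r : ℕ} (hm : 0 < m) (hr : 0 < r) (g : ℕ → ℕ) :
    ∑ α ∈ multiIdx m r, g (∑ i, α i) =
      ∑ k ∈ Finset.range r, g k * (k + m - 1).choose (m - 1) := by
  have hmap : ∀ α ∈ multiIdx m r, ∑ i, α i ∈ Finset.range r := by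
    intro α hα
    have := (Finset.mem_filter.1 hα).2
    exact Finset.mem_range.2 (by omega)
  rw [← Finset.sum_fiberwise_of_maps_to hmap]
  refine Finset.sum_congr rfl fun k hk => ?_
  rw [Finset.sum_congr rfl (g := fun _ => g k) (fun α hα => by rw [(Finset.mem_filter.1 hα).2]),
    Finset.sum_const, card_multiIdx_fiber hm (Finset.mem_range.1 hk), smul_eq_mul, mul_comm]

lemma card_multiIdx {m r : ℕ} (hm : 0 < m) (hr : 0 < r) :
    (multiIdx m r).card = (r - 1 + m).choose m := by
  have h := sum_multiIdx hm hr fun _ => 1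
  simp only [Finset.sum_const, smul_eq_mul, mul_one, one_mul] at h
  obtain ⟨m, rfl⟩ := Nat.exists_eq_succ_of_ne_zero hm.ne'
  obtain ⟨r, rfl⟩ := Nat.exists_eq_succ_of_ne_zero hr.ne'
  rw [h]
  exact Nat.sum_range_add_choose r m

/-- The weight of a row of `B`: the degree of a monomial row, and `r` for a remainder row. -/
def rowWeight (m r μ : ℕ) : multiIdx m r ⊕ Fin μ → ℕ :=
  Sum.elim (fun α => ∑ i, α.1 i) fun _ => r

/-- Any `μ` distinct rows of `B` have total weight at least the exponent of the estimate. -/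
lemma exponent_le {m r μ : ℕ} (hm : 0 < m) (hr : 0 < r) (hμ : (r - 1 + m).choose m ≤ μ)
    (f : Fin μ → multiIdx m r ⊕ Fin μ) (hf : Function.Injective f) :
    ∑ k ∈ Finset.range r, k * (k + m - 1).choose (m - 1) + r * (μ - (r - 1 + m).choose m) ≤
      ∑ i, rowWeight m r μ (f i) := by
  have hw : ∀ n, rowWeight m r μ n ≤ r := by
    rintro (α | j)
    · have := (Finset.mem_filter.1 α.2).2
      simp only [rowWeight, Sum.elim_inl]
      omega
    · simp [rowWeight]
  have hdef : ∑ i, (r - rowWeight m r μ (f i)) ≤ ∑ n, (r - rowWeight m r μ n) := by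
    classical
    rw [← Finset.sum_image (f := fun n => r - rowWeight m r μ n) (fun i _ j _ h => hf h)]
    exact Finset.sum_le_sum_of_subset (Finset.subset_univ _)
  have htot : ∑ n, (r - rowWeight m r μ n) = ∑ α ∈ multiIdx m r, (r - ∑ i, α i) := by
    rw [Fintype.sum_sum_type, ← Finset.sum_coe_sort (multiIdx m r)]
    simp [rowWeight]
  have hf_sum : ∑ i, (r - rowWeight m r μ (f i)) + ∑ i, rowWeight m r μ (f i) = r * μ := by
    rw [← Finset.sum_add_distrib,
      Finset.sum_congr rfl (fun i _ => Nat.sub_add_cancel (hw (f i)))]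
    simp [mul_comm]
  have hα_sum : ∑ α ∈ multiIdx m r, (r - ∑ i, α i) + ∑ α ∈ multiIdx m r, ∑ i, α i =
      r * (r - 1 + m).choose m := by
    rw [← Finset.sum_add_distrib, Finset.sum_congr rfl (g := fun _ => r), Finset.sum_const,
      card_multiIdx hm hr, smul_eq_mul, mul_comm]
    intro α hα
    have := (Finset.mem_filter.1 hα).2
    omega
  have hdeg := sum_multiIdx hm hr id
  simp only [id] at hdeg
  rw [Nat.mul_sub]
  have := Nat.mul_le_mul_left r hμ
  omega

/-- The determinant estimate (Lemma `detest` of the paper): if `ψ_1, …, ψ_μ` are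
functions evaluated at points `x_1, …, x_μ` lying within distance `ρ` of `x_1`,
each approximated by a Taylor polynomial of degree `r-1` centered at `x_1` with
coefficients of norm at most `1` and remainder of order `r`, and if
`D_m(r-1) ≤ μ < D_m(r)`, then `|det(ψ_i(x_j))| ≤ ρ^e` with
`e = ∑_{k=0}^{r-1} k L_m(k) + r (μ - D_m(r-1))`. -/
theorem determinant_estimate {K : Type*} [Field K] (v : AbsoluteValue K ℝ)
    (hna : IsNonarchimedean fun x => v x)
    (m r μ : ℕ) (hm : 0 < m) (hr : 0 < r)
    (hμ₀ : 0 < μ) (hμ₁ : (r - 1 + m).choose m ≤ μ) (hμ₂ : μ < (r + m).choose m)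
    (ρ : ℝ) (hρ₀ : 0 < ρ) (hρ₁ : ρ ≤ 1)
    (x : Fin μ → Fin m → K)
    (hx : ∀ j i, v (x j i - x ⟨0, hμ₀⟩ i) ≤ ρ)
    (ψ : Fin μ → Fin μ → K)
    (c : Fin μ → (Fin m → ℕ) → K)
    (hc : ∀ i, ∀ α ∈ multiIdx m r, v (c i α) ≤ 1)
    (hT : ∀ i j,
      v (ψ i j - ∑ α ∈ multiIdx m r, c i α * ∏ k, (x j k - x ⟨0, hμ₀⟩ k) ^ α k) ≤ ρ ^ r) :
    v (Matrix.det (Matrix.of ψ)) ≤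
      ρ ^ (∑ k ∈ Finset.range r, k * (k + m - 1).choose (m - 1)
            + r * (μ - (r - 1 + m).choose m)) := by
  classical
  let A : Matrix (Fin μ) (multiIdx m r ⊕ Fin μ) K :=
    Matrix.fromCols (Matrix.of fun i α => c i α.1) 1
  let B : Matrix (multiIdx m r ⊕ Fin μ) (Fin μ) K :=
    Matrix.fromRows (Matrix.of fun α j => ∏ k, (x j k - x ⟨0, hμ₀⟩ k) ^ α.1 k)
      (Matrix.of fun i j =>
        ψ i j - ∑ α ∈ multiIdx m r, c i α * ∏ k, (x j k - x ⟨0, hμ₀⟩ k) ^ α k)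
  have hAB : Matrix.of ψ = A * B := by
    rw [Matrix.fromCols_mul_fromRows, one_mul]
    ext i j
    simp only [Matrix.add_apply, Matrix.mul_apply, Matrix.of_apply]
    rw [Finset.sum_coe_sort (multiIdx m r)
      (fun α => c i α * ∏ k, (x j k - x ⟨0, hμ₀⟩ k) ^ α k)]
    ring
  rw [hAB]
  refine det_factor_le v hna A B (rowWeight m r μ) hρ₀.le hρ₁ ?_ ?_ _ (exponent_le hm hr hμ₁)
  · rintro i (α | j)
    · exact hc i α.1 α.2
    · by_cases h : i = j <;> simp [A, h]
  · rintro (α | i) j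
    · simp only [B, rowWeight, Matrix.fromRows_apply_inl, Matrix.of_apply, Sum.elim_inl, map_prod,
        map_pow, ← Finset.prod_pow_eq_pow_sum]
      exact Finset.prod_le_prod (fun k _ => pow_nonneg (v.nonneg _) _)
        fun k _ => pow_le_pow_left₀ (v.nonneg _) (hx j k) _
    · exact hT i j
end

section
/- Let K be a field equipped with a nonarchimedean absolute value |·|, and let 𝒪 = {x ∈ K : |x| ≤ 1}. Let r be a positive integer, let U be an open subset of 𝒪^n, let V be an open subset of 𝒪^m, and let f : U → V and g : V → 𝒪 be maps each satisfying the Taylor approximation property T_r. Then the composition g ∘ f : U → 𝒪 satisfies T_r. -/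
/-!
Fix a base point `y ∈ U` and let `𝒪` be the closed unit ball of `K`, a subring since `K` is
nonarchimedean.  Instead of Taylor polynomials of degree `< r`, consider approximation by
polynomials with coefficients in `𝒪` of *arbitrary* degree: call `φ` approximable at `y` if some
`p ∈ 𝒪[X₁, …, Xₙ]` satisfies `|φ x - p (x - y)| ≤ ‖x - y‖ ^ r` on `U`.  As `‖x - y‖ ≤ 1` on `U`,
values of such polynomials have norm at most `1`, so the approximable functions form a subring
(`approxSubring`), and allowing all degrees loses nothing: a monomial of degree at least `r` is
`O(‖x - y‖ ^ r)` with constant `1` (`norm_aeval_le`), so `p` may be truncated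
(`exists_taylor_of_mem`).

The coordinates of `f` are approximable, and approximable functions are `1`-Lipschitz from the base
point (`norm_sub_le_of_mem`).  Expanding `g` at `f y` writes `g ∘ f` as a polynomial over `𝒪` in the
functions `f i - f y i`, which is approximable by the ring property, plus an error of norm at
most `‖f x - f y‖ ^ r ≤ ‖x - y‖ ^ r`.
-/

open Finset

/-- The Taylor approximation property `T_r` for a map `f : X ⊆ K^m → K^n`:
`X` is open and around every `y ∈ X` the map `f` admits Taylor coefficients
`c_α(y)` of norm at most `1`, with constant term `f(y)`, approximating `f` on
all of `X` with remainder of order `r`.  (The norm on tuples is the sup norm.) -/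
def SatisfiesT {K : Type*} [NormedField K] (r m n : ℕ)
    (X : Set (Fin m → K)) (f : (Fin m → K) → (Fin n → K)) : Prop :=
  IsOpen X ∧ ∀ y ∈ X, ∃ c : (Fin m → ℕ) → (Fin n → K),
    c 0 = f y ∧ (∀ α ∈ multiIdx m r, ‖c α‖ ≤ 1) ∧
    ∀ x ∈ X, ‖f x - ∑ α ∈ multiIdx m r, (∏ i, (x i - y i) ^ α i) • c α‖ ≤ ‖x - y‖ ^ r

section Aux

open MvPolynomial

variable {K : Type*} [NormedField K]

lemma mem_multiIdx {m r : ℕ} (hr : 0 < r) (α : Fin m → ℕ) :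
    α ∈ multiIdx m r ↔ ∑ i, α i < r := by
  simp only [multiIdx, Finset.mem_filter, Fintype.mem_piFinset, Finset.mem_range]
  refine ⟨fun h => by omega, fun h => ⟨fun i => ?_, by omega⟩⟩
  exact (Finset.single_le_sum (f := α) (fun _ _ => Nat.zero_le _) (Finset.mem_univ i)).trans_lt h

variable [IsUltrametricDist K]

variable (K) in
/-- The closed unit ball `𝒪` of a nonarchimedean field, as a subring. -/
def unitBall : Subring K where
  carrier := {x | ‖x‖ ≤ 1}
  mul_mem' {a b} ha hb := by
    simp only [Set.mem_ofPred_eq] at *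
    rw [norm_mul]
    exact mul_le_one₀ ha (norm_nonneg _) hb
  one_mem' := by simp
  add_mem' {a b} ha hb := (IsUltrametricDist.norm_add_le_max a b).trans (max_le ha hb)
  zero_mem' := by simp
  neg_mem' {a} ha := by simpa using ha

/-- A polynomial over `𝒪` all of whose monomials have degree at least `s` is bounded by `‖h‖ ^ s`
on the closed unit ball. -/
lemma norm_aeval_le {n s : ℕ} (p : MvPolynomial (Fin n) (unitBall K)) (h : Fin n → K)
    (hh : ‖h‖ ≤ 1) (hp : ∀ d : Fin n →₀ ℕ, ∑ i, d i < s → p.coeff d = 0) :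
    ‖aeval h p‖ ≤ ‖h‖ ^ s := by
  rw [aeval_def, eval₂_eq']
  refine IsUltrametricDist.norm_sum_le_of_forall_le_of_nonneg (by positivity) fun d hd => ?_
  have hs : s ≤ ∑ i, d i := by
    by_contra hlt
    exact mem_support_iff.1 hd (hp d (not_le.1 hlt))
  calc ‖algebraMap (unitBall K) K (p.coeff d) * ∏ i, h i ^ d i‖
      = ‖((p.coeff d : unitBall K) : K)‖ * ∏ i, ‖h i‖ ^ d i := by
        rw [norm_mul, norm_prod]; simp only [norm_pow]; rfl
    _ ≤ 1 * ∏ i, ‖h‖ ^ d i := by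
        refine mul_le_mul (p.coeff d).2 ?_ (by positivity) zero_le_one
        exact Finset.prod_le_prod (fun i _ => by positivity)
          fun i _ => pow_le_pow_left₀ (norm_nonneg _) (norm_le_pi_norm h i) _
    _ = ‖h‖ ^ ∑ i, d i := by rw [one_mul, Finset.prod_pow_eq_pow_sum]
    _ ≤ ‖h‖ ^ s := pow_le_pow_of_le_one (norm_nonneg _) hh hs

/-- The subring of functions `K^n → K` approximated to order `r` at `y`, on all of `U`, by a
polynomial in `x - y` with coefficients in `𝒪` and no restriction on its degree.
Only the values on `U` matter. -/
def approxSubring {n : ℕ} (r : ℕ) (U : Set (Fin n → K)) (y : Fin n → K)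
    (hU : ∀ x ∈ U, ‖x - y‖ ≤ 1) : Subring ((Fin n → K) → K) where
  carrier := {φ | ∃ p : MvPolynomial (Fin n) (unitBall K),
    ∀ x ∈ U, ‖φ x - aeval (x - y) p‖ ≤ ‖x - y‖ ^ r}
  mul_mem' := by
    rintro φ ψ ⟨p, hp⟩ ⟨q, hq⟩
    refine ⟨p * q, fun x hx => ?_⟩
    have hp1 : ‖aeval (x - y) p‖ ≤ 1 := by
      simpa using norm_aeval_le (s := 0) p (x - y) (hU x hx) (by simp)
    have hq1 : ‖aeval (x - y) q‖ ≤ 1 := by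
      simpa using norm_aeval_le (s := 0) q (x - y) (hU x hx) (by simp)
    have hr1 : ‖x - y‖ ^ r ≤ 1 := pow_le_one₀ (norm_nonneg _) (hU x hx)
    have hψ1 : ‖ψ x‖ ≤ 1 := by
      rw [← sub_add_cancel (ψ x) (aeval (x - y) q)]
      exact (IsUltrametricDist.norm_add_le_max _ _).trans (max_le ((hq x hx).trans hr1) hq1)
    have e : (φ * ψ) x - aeval (x - y) (p * q) =
        (φ x - aeval (x - y) p) * ψ x + aeval (x - y) p * (ψ x - aeval (x - y) q) := by
      rw [map_mul, Pi.mul_apply]; ring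
    rw [e]
    refine (IsUltrametricDist.norm_add_le_max _ _).trans (max_le ?_ ?_)
    · rw [norm_mul]
      exact (mul_le_of_le_one_right (norm_nonneg _) hψ1).trans (hp x hx)
    · rw [norm_mul]
      exact (mul_le_of_le_one_left (norm_nonneg _) hp1).trans (hq x hx)
  one_mem' := ⟨1, fun x _ => by simp⟩
  add_mem' := by
    rintro φ ψ ⟨p, hp⟩ ⟨q, hq⟩
    refine ⟨p + q, fun x hx => ?_⟩
    rw [map_add, Pi.add_apply, add_sub_add_comm]
    exact (IsUltrametricDist.norm_add_le_max _ _).trans (max_le (hp x hx) (hq x hx))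
  zero_mem' := ⟨0, fun x _ => by simp⟩
  neg_mem' := by
    rintro φ ⟨p, hp⟩
    refine ⟨-p, fun x hx => ?_⟩
    rw [map_neg, Pi.neg_apply, ← neg_sub', norm_neg]
    exact hp x hx

section

variable {n r : ℕ} {U : Set (Fin n → K)} {y : Fin n → K} {hU : ∀ x ∈ U, ‖x - y‖ ≤ 1}

lemma const_mem_approxSubring {a : K} (ha : ‖a‖ ≤ 1) :
    (fun _ => a) ∈ approxSubring r U y hU := by
  refine ⟨C ⟨a, ha⟩, fun x _ => ?_⟩
  have e : aeval (x - y) (C (⟨a, ha⟩ : unitBall K) : MvPolynomial (Fin n) (unitBall K)) = a :=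
    aeval_C _ _
  rw [e]
  simp

lemma mem_approxSubring_of_near {φ ψ : (Fin n → K) → K} (hφ : φ ∈ approxSubring r U y hU)
    (h : ∀ x ∈ U, ‖ψ x - φ x‖ ≤ ‖x - y‖ ^ r) : ψ ∈ approxSubring r U y hU := by
  obtain ⟨p, hp⟩ := hφ
  refine ⟨p, fun x hx => ?_⟩
  rw [← sub_add_sub_cancel (ψ x) (φ x)]
  exact (IsUltrametricDist.norm_add_le_max _ _).trans (max_le (h x hx) (hp x hx))

/-- The polynomial with prescribed coefficients in degrees `< r`. -/
noncomputable def taylorPoly (n r : ℕ) (c : (Fin n → ℕ) → unitBall K) :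
    MvPolynomial (Fin n) (unitBall K) :=
  ∑ α ∈ multiIdx n r, monomial (Finsupp.equivFunOnFinite.symm α) (c α)

lemma aeval_taylorPoly (c : (Fin n → ℕ) → unitBall K) (h : Fin n → K) :
    aeval h (taylorPoly n r c) = ∑ α ∈ multiIdx n r, (∏ i, h i ^ α i) * (c α : K) := by
  rw [taylorPoly, map_sum]
  refine Finset.sum_congr rfl fun α _ => ?_
  rw [aeval_monomial, mul_comm, Finsupp.prod_fintype _ _ (by simp)]
  rfl

lemma coeff_taylorPoly (c : (Fin n → ℕ) → unitBall K) (d : Fin n →₀ ℕ)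
    (hd : (d : Fin n → ℕ) ∈ multiIdx n r) : (taylorPoly n r c).coeff d = c d := by
  rw [taylorPoly, coeff_sum, Finset.sum_eq_single (d : Fin n → ℕ)]
  · rw [coeff_monomial, if_pos]
    ext; rfl
  · intro α _ hα
    rw [coeff_monomial, if_neg]
    rintro rfl
    exact hα rfl
  · exact fun h => absurd hd h

lemma mem_approxSubring_of_taylor {φ : (Fin n → K) → K} (c : (Fin n → ℕ) → K)
    (hc : ∀ α ∈ multiIdx n r, ‖c α‖ ≤ 1)
    (h : ∀ x ∈ U, ‖φ x - ∑ α ∈ multiIdx n r, (∏ i, (x i - y i) ^ α i) * c α‖ ≤ ‖x - y‖ ^ r) :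
    φ ∈ approxSubring r U y hU := by
  have hex : ∀ α, ∃ e : unitBall K, α ∈ multiIdx n r → (e : K) = c α := fun α => by
    by_cases hα : α ∈ multiIdx n r
    · exact ⟨⟨c α, hc α hα⟩, fun _ => rfl⟩
    · exact ⟨0, fun h' => absurd h' hα⟩
  choose e he using hex
  refine ⟨taylorPoly n r e, fun x hx => ?_⟩
  rw [aeval_taylorPoly, Finset.sum_congr rfl fun α hα => by rw [he α hα]]
  exact h x hx

/-- Evaluating the approximation at the base point: the remainder vanishes there. -/
lemma coeff_zero_eq (hr : 0 < r) (hy : y ∈ U) {φ : (Fin n → K) → K}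
    {p : MvPolynomial (Fin n) (unitBall K)}
    (hp : ∀ x ∈ U, ‖φ x - aeval (x - y) p‖ ≤ ‖x - y‖ ^ r) : ((p.coeff 0 : unitBall K) : K) = φ y := by
  have h := hp y hy
  rw [sub_self, norm_zero, zero_pow hr.ne', norm_le_zero_iff, sub_eq_zero] at h
  rw [h, aeval_zero]
  rfl

/-- Approximable functions are `1`-Lipschitz from the base point. -/
lemma norm_sub_le_of_mem (hr : 0 < r) (hy : y ∈ U) {φ : (Fin n → K) → K}
    (hφ : φ ∈ approxSubring r U y hU) {x : Fin n → K} (hx : x ∈ U) :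
    ‖φ x - φ y‖ ≤ ‖x - y‖ := by
  obtain ⟨p, hp⟩ := hφ
  have h0 := coeff_zero_eq hr hy hp
  have e : φ x - φ y = (φ x - aeval (x - y) p) + aeval (x - y) (p - C (p.coeff 0)) := by
    have e' : aeval (x - y) (C (p.coeff 0) : MvPolynomial (Fin n) (unitBall K)) = φ y :=
      (aeval_C _ _).trans h0
    rw [map_sub, e']; ring
  rw [e]
  refine (IsUltrametricDist.norm_add_le_max _ _).trans (max_le ?_ ?_)
  · exact (hp x hx).trans (pow_le_of_le_one (norm_nonneg _) (hU x hx) hr.ne')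
  · rw [← pow_one ‖x - y‖]
    refine norm_aeval_le _ _ (hU x hx) fun d hd => ?_
    have hd0 : d = 0 := by
      ext i
      have := (Finset.sum_eq_zero_iff.1 (Nat.lt_one_iff.1 hd)) i (Finset.mem_univ i)
      simpa using this
    subst hd0
    simp

/-- Truncating an approximating polynomial in degree `r` yields Taylor coefficients. -/
lemma exists_taylor_of_mem (hr : 0 < r) (hy : y ∈ U) {φ : (Fin n → K) → K}
    (hφ : φ ∈ approxSubring r U y hU) :
    ∃ c : (Fin n → ℕ) → K, c 0 = φ y ∧ (∀ α, ‖c α‖ ≤ 1) ∧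
      ∀ x ∈ U, ‖φ x - ∑ α ∈ multiIdx n r, (∏ i, (x i - y i) ^ α i) * c α‖ ≤ ‖x - y‖ ^ r := by
  obtain ⟨p, hp⟩ := hφ
  let c : (Fin n → ℕ) → unitBall K := fun α => p.coeff (Finsupp.equivFunOnFinite.symm α)
  refine ⟨fun α => c α, ?_, fun α => (c α).2, fun x hx => ?_⟩
  · rw [← coeff_zero_eq hr hy hp]
    have : (Finsupp.equivFunOnFinite.symm 0 : Fin n →₀ ℕ) = 0 := by ext; rfl
    simp only [c, this]
  · have e := aeval_taylorPoly (r := r) c (x - y)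
    simp only [Pi.sub_apply] at e
    rw [← e, ← sub_add_sub_cancel (φ x) (aeval (x - y) p), ← map_sub]
    refine (IsUltrametricDist.norm_add_le_max _ _).trans (max_le (hp x hx) ?_)
    refine norm_aeval_le _ _ (hU x hx) fun d hd => ?_
    rw [coeff_sub, coeff_taylorPoly c d ((mem_multiIdx hr _).2 hd), sub_eq_zero]
    simp only [c]
    congr 1
    ext
    rfl

end

end Aux

/-- Composition of maps satisfying `T_r` (Lemma `prod` of the paper): if
`f : U → V` and `g : V → 𝒪` satisfy `T_r`, with `U ⊆ 𝒪^n` and `V ⊆ 𝒪^m` open,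
then `g ∘ f` satisfies `T_r`. -/
theorem satisfiesT_comp {K : Type*} [NormedField K]
    (hna : IsNonarchimedean fun x : K => ‖x‖)
    (r n m : ℕ) (hr : 0 < r)
    (U : Set (Fin n → K)) (V : Set (Fin m → K))
    (hU : ∀ x ∈ U, ∀ i, ‖x i‖ ≤ 1) (hV : ∀ y ∈ V, ∀ i, ‖y i‖ ≤ 1)
    (f : (Fin n → K) → (Fin m → K)) (g : (Fin m → K) → (Fin 1 → K))
    (hrange : ∀ x ∈ U, f x ∈ V) (hgO : ∀ y ∈ V, ‖g y 0‖ ≤ 1)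
    (hf : SatisfiesT r n m U f) (hg : SatisfiesT r m 1 V g) :
    SatisfiesT r n 1 U (g ∘ f) := by
  have : IsUltrametricDist K :=
    IsUltrametricDist.isUltrametricDist_of_isNonarchimedean_norm hna
  refine ⟨hf.1, fun y hy => ?_⟩
  obtain ⟨c, -, hc1, hcR⟩ := hf.2 y hy
  obtain ⟨d, -, hd1, hdR⟩ := hg.2 (f y) (hrange y hy)
  have hU1 : ∀ x ∈ U, ‖x - y‖ ≤ 1 := fun x hx =>
    (pi_norm_le_iff_of_nonneg zero_le_one).2 fun i => by
      rw [Pi.sub_apply, sub_eq_add_neg]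
      refine (IsUltrametricDist.norm_add_le_max _ _).trans (max_le (hU x hx i) ?_)
      rw [norm_neg]
      exact hU y hy i
  have hfA : ∀ i, (fun x => f x i) ∈ approxSubring r U y hU1 := fun i => by
    refine mem_approxSubring_of_taylor (fun α => c α i)
      (fun α hα => (norm_le_pi_norm (c α) i).trans (hc1 α hα)) fun x hx => ?_
    refine le_trans ?_ (hcR x hx)
    refine le_trans (le_of_eq ?_) (norm_le_pi_norm _ i)
    simp [Finset.sum_apply]
  have hlip : ∀ x ∈ U, ‖f x - f y‖ ≤ ‖x - y‖ := fun x hx =>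
    (pi_norm_le_iff_of_nonneg (norm_nonneg _)).2 fun i => norm_sub_le_of_mem hr hy (hfA i) hx
  have hsum : (∑ β ∈ multiIdx m r,
      (∏ i, ((fun x => f x i) - fun _ => f y i) ^ β i) * fun _ => d β 0) ∈
      approxSubring r U y hU1 := by
    refine sum_mem fun β hβ => mul_mem (prod_mem fun i _ => pow_mem (sub_mem (hfA i) ?_) _) ?_
    · exact const_mem_approxSubring (hV _ (hrange y hy) i)
    · exact const_mem_approxSubring ((norm_le_pi_norm (d β) 0).trans (hd1 β hβ))
  have hgf : (fun x => g (f x) 0) ∈ approxSubring r U y hU1 := by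
    refine mem_approxSubring_of_near hsum fun x hx => ?_
    refine le_trans ?_ ((hdR (f x) (hrange x hx)).trans
      (pow_le_pow_left₀ (norm_nonneg _) (hlip x hx) r))
    refine le_trans (le_of_eq ?_) (norm_le_pi_norm _ 0)
    simp [Finset.sum_apply, Finset.prod_apply]
  obtain ⟨a, ha0, ha1, haR⟩ := exists_taylor_of_mem hr hy hgf
  refine ⟨fun α _ => a α, ?_, fun α _ => ?_, fun x hx => ?_⟩
  · ext i
    rw [Subsingleton.elim i 0]
    exact ha0
  · exact (pi_norm_le_iff_of_nonneg zero_le_one).2 fun _ => ha1 α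
  · refine (pi_norm_le_iff_of_nonneg (by positivity)).2 fun i => ?_
    rw [Subsingleton.elim i 0]
    refine le_trans (le_of_eq ?_) (haR x hx)
    simp [Finset.sum_apply]
end

section
/- Fix integers 0 < m < n and a prime p. For every integer d ≥ 1 there exist a positive integer r = r(m,n,d) and positive real constants ε(m,n,d) and C(m,n,d), with ε(m,n,d) → 0 as d → ∞ (for m, n fixed), such that the following holds: for every real number T > 1, every open subset U of ℤ_p^m, and every map ψ = (ψ_1,…,ψ_n) : U → ℚ_p^n satisfying the Taylor approximation property T_r, the set ψ(U)(ℤ,T) is contained in the union of the zero sets of at most C(m,n,d)·T^{ε(m,n,d)} nonzero polynomials in ℚ_p[X_1,…,X_n] of total degree at most d. -/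
/-!
The proof is the `p`-adic determinant method. Fix `t ≥ 1` and put `Q = (2 t) ^ m`, `r = t Q`; for
large `d` the largest such `t` with `n Q ≤ d` is used. Consider the `μ = Q ^ n` monomials in `n`
variables with all exponents `< Q`. At `μ` integral points of `ψ(U)` of height at most `T`, the
determinant of the values of these monomials is an integer of absolute value at most
`μ! * T ^ (n Q μ)`. If the parameters of these points lie in a common ball of radius `p ^ (-k)`,
Taylor approximation shows that modulo `p ^ (k r)` the matrix factors through a free `ℤ_p`-module
whose rank `N` is the number of monomials of degree `< r` in `m` variables (`det_dvd`). Hence the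
determinant is divisible by `p ^ (k r (μ - N))` (`det_factor`). Since `2 N ≤ 2 r ^ m ≤ μ`, it
vanishes as soon as `p ^ (k r) > (μ!) ^ 2 * T ^ (2 n Q)`, and linear algebra (`exists_poly`) then
gives a polynomial of degree at most `n Q ≤ d` vanishing at all the integral points coming from the
ball (`local_estimate`). For the least such `k`, the number `p ^ (k m)` of balls covering `U` is
`O(T ^ (2 n m / t))` (`global_estimate`), and `t → ∞` as `d → ∞`. For the finitely many `d` without
an admissible `t ≥ 1`, parallel coordinate hyperplanes suffice (`trivial_estimate`).
-/

open Finset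

/-! ### Divisibility of determinants -/

/-- If `M` agrees modulo `c` with a matrix `V * B` that factors through a free module of rank
`N = #A`, then `c ^ (#ι - N)` divides `det M`; this is stated without truncated subtraction. The
block matrix `[[1, B], [-V, c E]]` has determinant `det (c E + V B)` by the Schur complement, and
multiplying its first `N` columns by `c` makes all of its last `#ι` rows divisible by `c`. -/
lemma det_factor {R ι A : Type*} [CommRing R] [Fintype ι] [DecidableEq ι] [Fintype A]
    [DecidableEq A] (c : R) (V : Matrix ι A R) (B : Matrix A ι R) (E : Matrix ι ι R) :
    c ^ Fintype.card ι ∣ c ^ Fintype.card A * (c • E + V * B).det := by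
  have h1 : (Matrix.fromBlocks 1 B (-V) (c • E)).det = (c • E + V * B).det := by
    rw [Matrix.det_fromBlocks_one₁₁]
    congr 1
    rw [Matrix.neg_mul, sub_neg_eq_add]
  have h2 : Matrix.fromBlocks 1 B (-V) (c • E) *
        Matrix.fromBlocks (c • (1 : Matrix A A R)) 0 0 (1 : Matrix ι ι R) =
      Matrix.fromBlocks (1 : Matrix A A R) 0 0 (c • (1 : Matrix ι ι R)) *
        Matrix.fromBlocks (c • (1 : Matrix A A R)) B (-V) E := by
    simp [Matrix.fromBlocks_multiply]
  have h3 := congrArg Matrix.det h2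
  rw [Matrix.det_mul, Matrix.det_mul, h1, Matrix.det_fromBlocks_zero₁₂,
    Matrix.det_fromBlocks_zero₁₂, Matrix.det_smul, Matrix.det_smul] at h3
  simp only [Matrix.det_one, mul_one, one_mul] at h3
  rw [mul_comm, h3]
  exact dvd_mul_right _ _

/-- Truncation: on points all of whose coordinates are divisible by `π`, a polynomial is congruent
modulo `π ^ r` to the sum of its terms of degree less than `r`. -/
lemma exists_trunc {R : Type*} [CommRing R] {m r : ℕ} (hr : 0 < r) (π : R)
    (P : MvPolynomial (Fin m) R) :
    ∃ b : (Fin m → ℕ) → R, ∀ x : Fin m → R, (∀ l, π ∣ x l) →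
      π ^ r ∣ MvPolynomial.eval x P - ∑ α ∈ multiIdx m r, (∏ l, x l ^ α l) * b α := by
  classical
  induction P using MvPolynomial.induction_on' with
  | monomial u a =>
    by_cases hu : (u : Fin m → ℕ) ∈ multiIdx m r
    · refine ⟨Pi.single (u : Fin m → ℕ) a, fun x _ => ?_⟩
      have : ∑ α ∈ multiIdx m r, (∏ l, x l ^ α l) * (Pi.single (u : Fin m → ℕ) a : _ → R) α =
          (∏ l, x l ^ u l) * a := by
        rw [Finset.sum_eq_single_of_mem _ hu]
        · simp
        · intro α _ h
          simp [Pi.single_eq_of_ne h]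
      rw [this, MvPolynomial.eval_monomial, Finsupp.prod_fintype _ _ (by simp), mul_comm, sub_self]
      exact dvd_zero _
    · refine ⟨0, fun x hx => ?_⟩
      have hdeg : r ≤ ∑ i, u i := by
        by_contra! hlt
        refine hu (Finset.mem_filter.2 ⟨Fintype.mem_piFinset.2 fun i => Finset.mem_range.2 ?_, ?_⟩)
        · exact (Finset.single_le_sum (fun _ _ => Nat.zero_le _) (Finset.mem_univ i)).trans_lt hlt
        · omega
      rw [MvPolynomial.eval_monomial, Finsupp.prod_fintype _ _ (by simp)]
      simp only [Pi.zero_apply, mul_zero, Finset.sum_const_zero, sub_zero]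
      refine Dvd.dvd.mul_left ((pow_dvd_pow π hdeg).trans ?_) _
      rw [← Finset.prod_pow_eq_pow_sum]
      exact Finset.prod_dvd_prod_of_dvd _ _ fun i _ => pow_dvd_pow_of_dvd (hx i) _
  | add p q hp hq =>
    obtain ⟨b, hb⟩ := hp
    obtain ⟨b', hb'⟩ := hq
    refine ⟨b + b', fun x hx => ?_⟩
    convert dvd_add (hb x hx) (hb' x hx) using 1
    simp only [map_add, Pi.add_apply, mul_add, Finset.sum_add_distrib]
    ring

lemma card_multiIdx_le (m r : ℕ) : (multiIdx m r).card ≤ r ^ m := by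
  refine (Finset.card_filter_le _ _).trans ?_
  simp

/-- The determinant estimate. If `n` functions on a finite set of points are approximated modulo
`π ^ r` by polynomials in `m` local coordinates divisible by `π`, then a determinant formed with
monomials in these functions is divisible by a high power of `π`: products of such functions are
again approximated by polynomials, whose truncations live in a module of rank `#(multiIdx m r)`. -/
lemma det_dvd {R ι : Type*} [CommRing R] [IsDomain R] [Fintype ι] [DecidableEq ι] {m n r : ℕ}
    (hr : 0 < r) (π : R) (hπ : π ≠ 0) (x : ι → Fin m → R) (hx : ∀ i l, π ∣ x i l)
    (f : ι → Fin n → R) (P : Fin n → MvPolynomial (Fin m) R)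
    (hf : ∀ i l, π ^ r ∣ f i l - MvPolynomial.eval (x i) (P l)) (e : ι → Fin n → ℕ)
    (hcard : (multiIdx m r).card ≤ Fintype.card ι) :
    (π ^ r) ^ (Fintype.card ι - (multiIdx m r).card) ∣
      (Matrix.of fun i j => ∏ l, f i l ^ e j l).det := by
  classical
  choose b hb using fun j => exists_trunc hr π (∏ l, P l ^ e j l)
  have key : ∀ i j, ∃ z, ∏ l, f i l ^ e j l =
      π ^ r * z + ∑ α ∈ multiIdx m r, (∏ l, x i l ^ α l) * b j α := by
    intro i j
    have h1 : π ^ r ∣ ∏ l, f i l ^ e j l - MvPolynomial.eval (x i) (∏ l, P l ^ e j l) := by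
      rw [← Ideal.mem_span_singleton, ← Ideal.Quotient.eq]
      simp only [map_prod, map_pow]
      refine Finset.prod_congr rfl fun l _ => congrArg (· ^ e j l) ?_
      rw [Ideal.Quotient.eq, Ideal.mem_span_singleton]
      exact hf i l
    obtain ⟨z, hz⟩ := dvd_add h1 (hb j (x i) (hx i))
    exact ⟨z, by rw [← hz]; ring⟩
  choose z hz using key
  have hM : (Matrix.of fun i j => ∏ l, f i l ^ e j l) = π ^ r • Matrix.of z +
      (Matrix.of fun i (α : multiIdx m r) => ∏ l, x i l ^ α.1 l) *
        Matrix.of fun (α : multiIdx m r) j => b j α.1 := by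
    ext i j
    simp only [Matrix.of_apply, Matrix.add_apply, Matrix.smul_apply, Matrix.mul_apply, smul_eq_mul,
      hz i j]
    rw [← Finset.sum_coe_sort]
  have := det_factor (π ^ r) (Matrix.of fun i (α : multiIdx m r) => ∏ l, x i l ^ α.1 l)
    (Matrix.of fun (α : multiIdx m r) j => b j α.1) (Matrix.of z)
  rw [← hM, Fintype.card_coe] at this
  rw [← Nat.add_sub_cancel' hcard, pow_add] at this
  exact (mul_dvd_mul_iff_left (pow_ne_zero _ (pow_ne_zero _ hπ))).1 this

/-! ### Hypersurfaces from vanishing determinants -/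

/-- Linear algebra over a field: if all square matrices of values of the monomials with exponents
`< Q` at points of `Y` are singular, then `Y` lies in a hypersurface whose equation is a linear
combination of these monomials. -/
lemma exists_poly {K : Type*} [Field K] {n Q : ℕ} (Y : Set (Fin n → K))
    (hY : ∀ y : (Fin n → Fin Q) → Fin n → K, (∀ i, y i ∈ Y) →
      (Matrix.of fun i (j : Fin n → Fin Q) => ∏ l, y i l ^ (j l : ℕ)).det = 0) :
    ∃ P : MvPolynomial (Fin n) K, P ≠ 0 ∧ P.totalDegree ≤ n * Q ∧
      ∀ y ∈ Y, MvPolynomial.eval y P = 0 := by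
  classical
  let v : (Fin n → K) → (Fin n → Fin Q) → K := fun y j => ∏ l, y l ^ (j l : ℕ)
  let W : Submodule K ((Fin n → Fin Q) → K) := Submodule.span K (v '' Y)
  have hW : W < ⊤ := by
    rw [lt_top_iff_ne_top]
    intro htop
    obtain ⟨b, hb, hspan, hli⟩ := exists_linearIndependent K (v '' Y)
    have hs : ⊤ ≤ Submodule.span K (Set.range ((↑) : b → (Fin n → Fin Q) → K)) := by
      rw [Subtype.range_coe, hspan]
      exact htop.ge
    let B := Module.Basis.mk hli hs
    let e := B.indexEquiv (Pi.basisFun K (Fin n → Fin Q))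
    choose y hyY hy using fun i => hb (e.symm i).2
    have h0 := hY y hyY
    have hrow : LinearIndependent K
        (Matrix.of fun i (j : Fin n → Fin Q) => ∏ l, y i l ^ (j l : ℕ)).row := by
      have : (Matrix.of fun i (j : Fin n → Fin Q) => ∏ l, y i l ^ (j l : ℕ)).row =
          (fun z : b => (z : (Fin n → Fin Q) → K)) ∘ e.symm := by
        funext i
        exact hy i
      rw [this]
      exact hli.comp _ e.symm.injective
    rw [Matrix.linearIndependent_rows_iff_isUnit, Matrix.isUnit_iff_isUnit_det, h0] at hrow
    exact not_isUnit_zero hrow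
  obtain ⟨φ, hφ, hker⟩ := Submodule.exists_le_ker_of_lt_top W hW
  let c : (Fin n → Fin Q) → K := fun j => φ (Pi.single j 1)
  have hφc : ∀ w, φ w = ∑ j, w j * c j := by
    intro w
    rw [LinearMap.pi_apply_eq_sum_univ]
    refine Finset.sum_congr rfl fun j _ => ?_
    rw [smul_eq_mul]
    congr 2
    funext i
    simp [Pi.single_apply, eq_comm]
  let s : (Fin n → Fin Q) → Fin n →₀ ℕ := fun j => Finsupp.equivFunOnFinite.symm fun l => (j l : ℕ)
  have hsinj : Function.Injective s := by
    intro j j' h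
    have := Finsupp.equivFunOnFinite.symm.injective h
    funext l
    exact Fin.ext (congrFun this l)
  refine ⟨∑ j, MvPolynomial.monomial (s j) (c j), ?_, ?_, ?_⟩
  · intro h
    refine hφ (LinearMap.ext fun w => ?_)
    rw [hφc, LinearMap.zero_apply]
    refine Finset.sum_eq_zero fun j _ => ?_
    have := congrArg (MvPolynomial.coeff (s j)) h
    rw [MvPolynomial.coeff_sum, MvPolynomial.coeff_zero,
      Finset.sum_eq_single_of_mem j (Finset.mem_univ _)] at this
    · rw [MvPolynomial.coeff_monomial, if_pos rfl] at this
      rw [this, mul_zero]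
    · intro j' _ hne
      rw [MvPolynomial.coeff_monomial, if_neg fun h => hne (hsinj h)]
  · refine MvPolynomial.totalDegree_finsetSum_le fun j _ => ?_
    refine (MvPolynomial.totalDegree_monomial_le _ _).trans ?_
    rw [Finsupp.sum_fintype _ _ (by simp)]
    refine (Finset.sum_le_card_nsmul _ _ Q fun l _ => ?_).trans (by simp)
    exact (j l).2.le
  · intro y hy
    have h0 : φ (v y) = 0 := hker (Submodule.subset_span (Set.mem_image_of_mem _ hy))
    rw [hφc] at h0
    rw [map_sum, ← h0]
    refine Finset.sum_congr rfl fun j _ => ?_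
    rw [MvPolynomial.eval_monomial, Finsupp.prod_fintype _ _ (by simp), mul_comm]
    rfl

/-- Since one coordinate takes at most `2T + 1 ≤ 3T` values, coordinate hyperplanes suffice when
the exponent `1` is allowed. -/
lemma trivial_estimate_s2 {K : Type*} [Field K] {n : ℕ} (hn : 0 < n) (T : ℝ) (hT : 1 < T) :
    ∃ S : Finset (MvPolynomial (Fin n) K),
      (∀ P ∈ S, P ≠ 0 ∧ P.totalDegree ≤ 1) ∧ (S.card : ℝ) ≤ 3 * T ∧
      ∀ y : Fin n → K, (∀ i, ∃ a : ℤ, |(a : ℝ)| ≤ T ∧ (a : K) = y i) →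
        ∃ P ∈ S, MvPolynomial.eval y P = 0 := by
  classical
  refine ⟨(Finset.Icc (-⌊T⌋) ⌊T⌋).image fun a : ℤ =>
    MvPolynomial.X ⟨0, hn⟩ - MvPolynomial.C (a : K), ?_, ?_, ?_⟩
  · intro P hP
    obtain ⟨a, -, rfl⟩ := Finset.mem_image.1 hP
    refine ⟨fun h => ?_, ?_⟩
    · have := congrArg (MvPolynomial.eval fun _ => (a : K) + 1) h
      simp at this
    · refine (MvPolynomial.totalDegree_sub _ _).trans ?_
      rw [MvPolynomial.totalDegree_X, MvPolynomial.totalDegree_C]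
      exact le_rfl
  · refine (Nat.cast_le.2 Finset.card_image_le).trans ?_
    have h1 : (1 : ℤ) ≤ ⌊T⌋ := Int.le_floor.2 (by exact_mod_cast hT.le)
    rw [Int.card_Icc]
    have : ((⌊T⌋ + 1 - -⌊T⌋).toNat : ℝ) = 2 * (⌊T⌋ : ℝ) + 1 := by
      have h2 : ((⌊T⌋ + 1 - -⌊T⌋).toNat : ℤ) = 2 * ⌊T⌋ + 1 := by omega
      exact_mod_cast h2
    rw [this]
    have := Int.floor_le T
    linarith
  · intro y hy
    obtain ⟨a, ha, hay⟩ := hy ⟨0, hn⟩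
    refine ⟨_, Finset.mem_image_of_mem _ (a := a) ?_, by simp [hay]⟩
    rw [abs_le] at ha
    rw [Finset.mem_Icc]
    constructor
    · have : -a ≤ ⌊T⌋ := Int.le_floor.2 (by push_cast; linarith)
      omega
    · exact Int.le_floor.2 ha.2

/-! ### The `p`-adic estimates -/

lemma dvd_of_norm_le {p : ℕ} [Fact p.Prime] (z : ℤ_[p]) (k : ℕ)
    (h : ‖z‖ ≤ ((p : ℝ) ^ k)⁻¹) : (p : ℤ_[p]) ^ k ∣ z := by
  rw [← Ideal.mem_span_singleton, ← PadicInt.norm_le_pow_iff_mem_span_pow]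
  simpa [zpow_neg] using h

/-- The local step: the integral points of `ψ` on a subset of `U` of diameter at most `p ^ (-k)`
lie on one hypersurface, once `p ^ (k r)` exceeds the (archimedean) size of the determinants of
monomials at such points. The determinant is an integer that is `p`-adically too small to be
nonzero. -/
lemma local_estimate {p : ℕ} [Fact p.Prime] {m n r Q k : ℕ} (hr : 0 < r) (hQ : 0 < Q)
    (hcard : 2 * r ^ m ≤ Q ^ n) {T : ℝ} (hT : 1 < T)
    (hk : (((Q ^ n).factorial : ℝ)) ^ 2 * T ^ (2 * (n * Q)) < ((p : ℝ) ^ r) ^ k)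
    {U A : Set (Fin m → ℚ_[p])} (hU : ∀ x ∈ U, ∀ i, ‖x i‖ ≤ 1)
    {ψ : (Fin m → ℚ_[p]) → (Fin n → ℚ_[p])} (hψ : SatisfiesT r m n U ψ) (hAU : A ⊆ U)
    (hA : ∀ x ∈ A, ∀ y ∈ A, ‖x - y‖ ≤ ((p : ℝ) ^ k)⁻¹)
    (hint : ∀ x ∈ A, ∀ i, ∃ a : ℤ, |(a : ℝ)| ≤ T ∧ (a : ℚ_[p]) = ψ x i) :
    ∃ P : MvPolynomial (Fin n) ℚ_[p], P ≠ 0 ∧ P.totalDegree ≤ n * Q ∧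
      ∀ x ∈ A, MvPolynomial.eval (ψ x) P = 0 := by
  classical
  suffices h : ∀ x : (Fin n → Fin Q) → Fin m → ℚ_[p], (∀ i, x i ∈ A) →
      (Matrix.of fun i (j : Fin n → Fin Q) => ∏ l, ψ (x i) l ^ (j l : ℕ)).det = 0 by
    obtain ⟨P, hP0, hPd, hP⟩ := exists_poly (Q := Q) (ψ '' A) (fun y hy => by
      choose x hxA hxy using hy
      have := h x hxA
      simpa only [hxy] using this)
    exact ⟨P, hP0, hPd, fun x hx => hP _ (Set.mem_image_of_mem _ hx)⟩
  intro x hx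
  choose a haT ha using fun i => hint (x i) (hx i)
  let i₀ : Fin n → Fin Q := fun _ => ⟨0, hQ⟩
  obtain ⟨c, -, hc1, hc⟩ := hψ.2 (x i₀) (hAU (hx i₀))
  -- Everything is transported to the ring of integers, where smallness is divisibility.
  let x' : (Fin n → Fin Q) → Fin m → ℤ_[p] := fun i l => ⟨x i l, hU _ (hAU (hx i)) l⟩
  let c' : (Fin m → ℕ) → Fin n → ℤ_[p] := fun α l =>
    if h : ‖c α l‖ ≤ 1 then ⟨c α l, h⟩ else 0
  have hc' : ∀ α ∈ multiIdx m r, ∀ l, ((c' α l : ℤ_[p]) : ℚ_[p]) = c α l := by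
    intro α hα l
    have : ‖c α l‖ ≤ 1 := (norm_le_pi_norm (c α) l).trans (hc1 α hα)
    rw [show c' α l = ⟨c α l, this⟩ from dif_pos this]
  let P : Fin n → MvPolynomial (Fin m) ℤ_[p] := fun l =>
    ∑ α ∈ multiIdx m r, MvPolynomial.monomial (Finsupp.equivFunOnFinite.symm α) (c' α l)
  have hdet := det_dvd hr ((p : ℤ_[p]) ^ k)
    (pow_ne_zero _ (Nat.cast_ne_zero.2 (Fact.out : p.Prime).ne_zero))
    (fun i l => x' i l - x' i₀ l) (fun i l => by
      refine dvd_of_norm_le _ _ ?_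
      exact (norm_le_pi_norm (x i - x i₀) l).trans (hA _ (hx i) _ (hx i₀)))
    (fun i l => (a i l : ℤ_[p])) P (fun i l => by
      rw [← pow_mul]
      refine dvd_of_norm_le _ _ ?_
      have h1 := (norm_le_pi_norm _ l).trans (hc (x i) (hAU (hx i)))
      have h2 : ‖x i - x i₀‖ ^ r ≤ ((p : ℝ) ^ (k * r))⁻¹ := by
        rw [pow_mul, ← inv_pow]
        exact pow_le_pow_left₀ (norm_nonneg _) (hA _ (hx i) _ (hx i₀)) r
      refine le_trans (le_of_eq ?_) (h1.trans h2)
      rw [PadicInt.norm_def]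
      congr 1
      rw [PadicInt.coe_sub, PadicInt.coe_intCast, ha i l, Pi.sub_apply, Finset.sum_apply, map_sum,
        PadicInt.coe_sum]
      congr 1
      refine Finset.sum_congr rfl fun α hα => ?_
      rw [MvPolynomial.eval_monomial, Finsupp.prod_fintype _ _ (by simp), PadicInt.coe_mul,
        hc' α hα, Pi.smul_apply, smul_eq_mul, mul_comm]
      congr 1
      change PadicInt.Coe.ringHom _ = _
      rw [map_prod]
      rfl)
    (fun j l => (j l : ℕ))
    (by
      rw [Fintype.card_fun, Fintype.card_fin, Fintype.card_fin]
      have := card_multiIdx_le m r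
      omega)
  let D : ℤ := (Matrix.of fun i (j : Fin n → Fin Q) => ∏ l, a i l ^ (j l : ℕ)).det
  have hDcast : ∀ (R : Type) [CommRing R], (D : R) =
      (Matrix.of fun i (j : Fin n → Fin Q) => ∏ l, (a i l : R) ^ (j l : ℕ)).det := by
    intro R _
    rw [Int.cast_det]
    congr 1
    ext i j
    simp
  have hcardι : Fintype.card (Fin n → Fin Q) = Q ^ n := by simp
  set μ := Q ^ n with hμ
  set N := (multiIdx m r).card with hN
  have hNμ : 2 * N ≤ μ := by
    have := card_multiIdx_le m r
    omega
  have hμ0 : μ ≠ 0 := pow_ne_zero _ hQ.ne'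
  have hp1 : (1 : ℝ) ≤ p := by exact_mod_cast (Fact.out : p.Prime).one_le
  have hD : D = 0 := by
    by_contra hD0
    rw [← hDcast ℤ_[p], hcardι, ← pow_mul, ← pow_mul, PadicInt.pow_p_dvd_int_iff] at hdet
    have hlow : ((p : ℝ) ^ (k * r)) ^ (μ - N) ≤ |(D : ℝ)| := by
      have := Int.le_of_dvd (abs_pos.2 hD0) ((dvd_abs _ _).2 hdet)
      rw [← pow_mul, mul_assoc]
      exact_mod_cast this
    have hup : |(D : ℝ)| ≤ (μ.factorial : ℝ) * (T ^ (n * Q)) ^ μ := by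
      rw [hDcast ℝ]
      have := Matrix.det_le (abv := AbsoluteValue.abs) (x := T ^ (n * Q))
        (A := Matrix.of fun i (j : Fin n → Fin Q) => ∏ l, (a i l : ℝ) ^ (j l : ℕ)) (by
          intro i j
          simp only [AbsoluteValue.abs_apply, Matrix.of_apply]
          rw [Finset.abs_prod]
          calc ∏ l, |(a i l : ℝ) ^ (j l : ℕ)| ≤ ∏ _l : Fin n, T ^ Q := by
                refine Finset.prod_le_prod (fun _ _ => abs_nonneg _) fun l _ => ?_
                rw [abs_pow]
                exact (pow_le_pow_left₀ (abs_nonneg _) (haT i l) _).trans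
                  (pow_le_pow_right₀ hT.le (j l).2.le)
            _ = T ^ (n * Q) := by
                rw [Finset.prod_const, Finset.card_univ, Fintype.card_fin, ← pow_mul, mul_comm])
      rw [hcardι, nsmul_eq_mul] at this
      exact this
    have hpk : (1 : ℝ) ≤ (p : ℝ) ^ (k * r) := one_le_pow₀ hp1
    have hfac : (1 : ℝ) ≤ (μ.factorial : ℝ) := by exact_mod_cast Nat.succ_le_of_lt μ.factorial_pos
    have hT0 : 0 < T := by linarith
    have : ((p : ℝ) ^ (k * r)) ^ μ < ((p : ℝ) ^ (k * r)) ^ μ :=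
      calc ((p : ℝ) ^ (k * r)) ^ μ ≤ ((p : ℝ) ^ (k * r)) ^ ((μ - N) * 2) :=
            pow_le_pow_right₀ hpk (by omega)
        _ = (((p : ℝ) ^ (k * r)) ^ (μ - N)) ^ 2 := pow_mul _ _ _
        _ ≤ ((μ.factorial : ℝ) * (T ^ (n * Q)) ^ μ) ^ 2 :=
            pow_le_pow_left₀ (by positivity) (hlow.trans hup) 2
        _ = (μ.factorial : ℝ) ^ 2 * (T ^ (2 * (n * Q))) ^ μ := by ring
        _ ≤ ((μ.factorial : ℝ) ^ 2) ^ μ * (T ^ (2 * (n * Q))) ^ μ := by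
            gcongr
            exact le_self_pow₀ (one_le_pow₀ hfac) hμ0
        _ = ((μ.factorial : ℝ) ^ 2 * T ^ (2 * (n * Q))) ^ μ := (mul_pow _ _ _).symm
        _ < (((p : ℝ) ^ r) ^ k) ^ μ := pow_lt_pow_left₀ hk (by positivity) hμ0
        _ = ((p : ℝ) ^ (k * r)) ^ μ := by rw [← pow_mul (p : ℝ), mul_comm r k]
    exact lt_irrefl _ this
  have := hDcast ℚ_[p]
  rw [hD, Int.cast_zero] at this
  simp only [ha] at this
  exact this.symm

/-- The global step: `U` is covered by the `p ^ (k m)` residue classes modulo `p ^ k`, where `k` is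
the least exponent allowed by `local_estimate`. -/
lemma global_estimate {p : ℕ} [Fact p.Prime] {m n r Q : ℕ} (hr : 0 < r) (hQ : 0 < Q)
    (hcard : 2 * r ^ m ≤ Q ^ n) {T : ℝ} (hT : 1 < T)
    {U : Set (Fin m → ℚ_[p])} (hU : ∀ x ∈ U, ∀ i, ‖x i‖ ≤ 1)
    {ψ : (Fin m → ℚ_[p]) → (Fin n → ℚ_[p])} (hψ : SatisfiesT r m n U ψ) :
    ∃ S : Finset (MvPolynomial (Fin n) ℚ_[p]),
      (∀ P ∈ S, P ≠ 0 ∧ P.totalDegree ≤ n * Q) ∧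
      (S.card : ℝ) ≤ ((p : ℝ) ^ m * ((((Q ^ n).factorial : ℝ)) ^ 2) ^ ((m : ℝ) / r)) *
        T ^ ((2 * n * m * Q : ℝ) / r) ∧
      ∀ y ∈ ψ '' U, (∀ i, ∃ a : ℤ, |(a : ℝ)| ≤ T ∧ (a : ℚ_[p]) = y i) →
        ∃ P ∈ S, MvPolynomial.eval y P = 0 := by
  classical
  set F : ℝ := (((Q ^ n).factorial : ℝ)) ^ 2 with hF
  have hF1 : 1 ≤ F := one_le_pow₀ (by exact_mod_cast Nat.succ_le_of_lt (Q ^ n).factorial_pos)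
  have hT0 : 0 < T := by linarith
  have hp1 : (1 : ℝ) < p := by exact_mod_cast (Fact.out : p.Prime).one_lt
  obtain ⟨k, hk1, hk2⟩ := exists_nat_pow_near (x := F * T ^ (2 * (n * Q))) (y := (p : ℝ) ^ r)
    (one_le_mul_of_one_le_of_one_le hF1 (one_le_pow₀ hT.le)) (one_lt_pow₀ hp1 hr.ne')
  let A : (Fin m → ZMod (p ^ (k + 1))) → Set (Fin m → ℚ_[p]) := fun c =>
    {x | x ∈ U ∧ (∀ i, ∃ a : ℤ, |(a : ℝ)| ≤ T ∧ (a : ℚ_[p]) = ψ x i) ∧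
      ∀ l, ∃ h : ‖x l‖ ≤ 1, PadicInt.toZModPow (k + 1) (⟨x l, h⟩ : ℤ_[p]) = c l}
  have hex := fun c => local_estimate hr hQ hcard hT hk2 hU hψ (A := A c) (fun x hx => hx.1)
    (fun x hx y hy => by
      refine (pi_norm_le_iff_of_nonneg (by positivity)).2 fun l => ?_
      obtain ⟨h1, h2⟩ := hx.2.2 l
      obtain ⟨h3, h4⟩ := hy.2.2 l
      let u : ℤ_[p] := ⟨x l, h1⟩
      let v : ℤ_[p] := ⟨y l, h3⟩
      have h5 : u - v ∈ RingHom.ker (PadicInt.toZModPow (p := p) (k + 1)) :=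
        RingHom.mem_ker.2 ((map_sub _ u v).trans (sub_eq_zero.2 (h2.trans h4.symm)))
      rw [PadicInt.ker_toZModPow, ← PadicInt.norm_le_pow_iff_mem_span_pow, zpow_neg,
        zpow_natCast] at h5
      exact h5)
    (fun x hx => hx.2.1)
  choose P hP0 hPd hP using hex
  have : NeZero (p ^ (k + 1)) := ⟨pow_ne_zero _ (Fact.out : p.Prime).ne_zero⟩
  refine ⟨Finset.univ.image P, ?_, ?_, ?_⟩
  · intro R hR
    obtain ⟨c, -, rfl⟩ := Finset.mem_image.1 hR
    exact ⟨hP0 c, hPd c⟩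
  · refine (Nat.cast_le.2 Finset.card_image_le).trans ?_
    rw [Finset.card_univ, Fintype.card_fun, ZMod.card, Fintype.card_fin]
    have hr0 : (r : ℝ) ≠ 0 := Nat.cast_ne_zero.2 hr.ne'
    have h1 : (p : ℝ) ^ (k * m) ≤ F ^ ((m : ℝ) / r) * T ^ ((2 * n * m * Q : ℝ) / r) :=
      calc (p : ℝ) ^ (k * m) = (((p : ℝ) ^ r) ^ k) ^ ((m : ℝ) / r) := by
            rw [← pow_mul, ← Real.rpow_natCast, ← Real.rpow_natCast, ← Real.rpow_mul (by positivity)]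
            congr 1
            push_cast
            field_simp
        _ ≤ (F * T ^ (2 * (n * Q))) ^ ((m : ℝ) / r) :=
            Real.rpow_le_rpow (by positivity) hk1 (by positivity)
        _ = F ^ ((m : ℝ) / r) * T ^ ((2 * n * m * Q : ℝ) / r) := by
            rw [Real.mul_rpow (by positivity) (by positivity), ← Real.rpow_natCast T,
              ← Real.rpow_mul hT0.le]
            congr 2
            push_cast
            ring
    calc (((p ^ (k + 1)) ^ m : ℕ) : ℝ) = (p : ℝ) ^ m * (p : ℝ) ^ (k * m) := by
          push_cast
          ring
      _ ≤ (p : ℝ) ^ m * (F ^ ((m : ℝ) / r) * T ^ ((2 * n * m * Q : ℝ) / r)) := by gcongr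
      _ = _ := (mul_assoc _ _ _).symm
  · rintro _ ⟨x, hx, rfl⟩ hint
    refine ⟨P fun l => PadicInt.toZModPow (k + 1) (⟨x l, hU x hx l⟩ : ℤ_[p]),
      Finset.mem_image_of_mem _ (Finset.mem_univ _), hP _ x ⟨hx, hint, fun l => ⟨hU x hx l, rfl⟩⟩⟩

/-! ### Choice of the parameters -/

/-- Lemma `basicest` of the paper: for fixed `0 < m < n` and every `d ≥ 1` there
are `r(m,n,d)`, `ε(m,n,d) > 0` and `C(m,n,d) > 0`, with `ε(m,n,d) → 0` as
`d → ∞`, such that for every `T > 1`, every open `U ⊆ ℤ_p^m` and every map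
`ψ : U → ℚ_p^n` satisfying `T_r`, the integral points of `ψ(U)` of archimedean
height at most `T` lie on at most `C T^ε` hypersurfaces of degree at most `d`. -/
theorem basic_estimate (p : ℕ) [Fact p.Prime] (m n : ℕ) (hm : 0 < m) (hmn : m < n) :
    ∃ (r : ℕ → ℕ) (ε C : ℕ → ℝ),
      Filter.Tendsto ε Filter.atTop (nhds 0) ∧
      ∀ d : ℕ, 1 ≤ d →
        0 < r d ∧ 0 < ε d ∧ 0 < C d ∧
        ∀ T : ℝ, 1 < T →
        ∀ U : Set (Fin m → ℚ_[p]), (∀ x ∈ U, ∀ i, ‖x i‖ ≤ 1) →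
        ∀ ψ : (Fin m → ℚ_[p]) → (Fin n → ℚ_[p]), SatisfiesT (r d) m n U ψ →
        ∃ S : Finset (MvPolynomial (Fin n) ℚ_[p]),
          (∀ P ∈ S, P ≠ 0 ∧ P.totalDegree ≤ d) ∧
          (S.card : ℝ) ≤ C d * T ^ ε d ∧
          ∀ y ∈ ψ '' U, (∀ i, ∃ a : ℤ, |(a : ℝ)| ≤ T ∧ (a : ℚ_[p]) = y i) →
            ∃ P ∈ S, MvPolynomial.eval y P = 0 := by
  classical
  let t : ℕ → ℕ := fun d => Nat.findGreatest (fun t => n * (2 * t) ^ m ≤ d) d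
  have ht : ∀ d, n * (2 * t d) ^ m ≤ d := by
    intro d
    refine Nat.findGreatest_spec (P := fun t => n * (2 * t) ^ m ≤ d) (Nat.zero_le d) ?_
    simp [hm.ne']
  have htop : Filter.Tendsto t Filter.atTop Filter.atTop := by
    refine Filter.tendsto_atTop.2 fun b => ?_
    filter_upwards [Filter.eventually_ge_atTop b,
      Filter.eventually_ge_atTop (n * (2 * b) ^ m)] with d h1 h2
    exact Nat.le_findGreatest h1 h2
  -- With `Q = (2 t) ^ m` and `r = t Q` one has `2 r ^ m ≤ Q ^ (m + 1) ≤ Q ^ n`, while the exponent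
  -- `2 n m Q / r = 2 n m / t` tends to zero. The case `t = 0` only concerns small `d`.
  refine ⟨fun d => if t d = 0 then 1 else t d * (2 * t d) ^ m,
    fun d => if t d = 0 then 1 else (2 * n * m : ℝ) / t d,
    fun d => if t d = 0 then 3 else
      (p : ℝ) ^ m * (((((2 * t d) ^ m) ^ n).factorial : ℝ) ^ 2) ^
        ((m : ℝ) / (t d * (2 * t d) ^ m : ℕ)), ?_, ?_⟩
  · have h0 : Filter.Tendsto (fun d => (2 * n * m : ℝ) / t d) Filter.atTop (nhds 0) :=
      (tendsto_natCast_atTop_atTop.comp htop).const_div_atTop _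
    refine h0.congr' ?_
    filter_upwards [htop.eventually_gt_atTop 0] with d hd
    rw [if_neg hd.ne']
  · intro d hd
    by_cases htd : t d = 0
    · simp only [if_pos htd]
      refine ⟨one_pos, one_pos, three_pos, fun T hT U _ ψ _ => ?_⟩
      obtain ⟨S, hS1, hS2, hS3⟩ := trivial_estimate_s2 (K := ℚ_[p]) (hm.trans hmn) T hT
      exact ⟨S, fun P hP => ⟨(hS1 P hP).1, (hS1 P hP).2.trans hd⟩, by rwa [Real.rpow_one],
        fun y _ hy => hS3 y hy⟩
    · simp only [if_neg htd]
      have htpos : 0 < t d := Nat.pos_of_ne_zero htd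
      have hn : 0 < n := hm.trans hmn
      have hp : 0 < p := (Fact.out : p.Prime).pos
      have hQ : 0 < (2 * t d) ^ m := by positivity
      have hr : 0 < t d * (2 * t d) ^ m := by positivity
      refine ⟨hr, by positivity, by positivity, fun T hT U hU ψ hψ => ?_⟩
      have hcard : 2 * (t d * (2 * t d) ^ m) ^ m ≤ ((2 * t d) ^ m) ^ n :=
        calc 2 * (t d * (2 * t d) ^ m) ^ m = 2 * t d ^ m * ((2 * t d) ^ m) ^ m := by
              rw [mul_pow (t d)]
              ring
          _ ≤ (2 * t d) ^ m * ((2 * t d) ^ m) ^ m := by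
              rw [mul_pow 2 (t d)]
              gcongr
              exact le_self_pow₀ one_le_two hm.ne'
          _ = ((2 * t d) ^ m) ^ (m + 1) := by rw [pow_succ' _ m]
          _ ≤ ((2 * t d) ^ m) ^ n := Nat.pow_le_pow_right hQ hmn
      obtain ⟨S, hS1, hS2, hS3⟩ := global_estimate hr hQ hcard hT hU hψ
      refine ⟨S, fun P hP => ⟨(hS1 P hP).1, (hS1 P hP).2.trans (ht d)⟩, ?_, hS3⟩
      refine hS2.trans (le_of_eq ?_)
      congr 2
      push_cast
      field_simp
end

section
/- Let K = ℂ((t)) be the field of formal Laurent series over ℂ, let n ≥ 1, and let I be an ideal of the polynomial ring K[X_1,…,X_n] such that the Krull dimension of the quotient ring K[X_1,…,X_n]/I equals m. Let X(K) denote the set of common zeros of I in K^n. Then for every positive integer r, the Zariski closure of X_r = X(K) ∩ (ℂ[t]_{<r})^n in ℂ^{nr} has dimension at most r·m; that is, there exists an ideal J of ℂ[Y_1,…,Y_{nr}] such that every point of X_r is a common zero of J and the Krull dimension of ℂ[Y_1,…,Y_{nr}]/J is at most r·m. -/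
/-!
The ideal `J` is the one generated by the equations of `X_r`. Write `O = k⟦t⟧`, `K = k((t))` and
let `R = k[Y_{ij}]` be the coordinate ring of `k^{nr}`. Substituting the generic tuple
`∑_{j<r} Y_{ij} t^j` into a polynomial `f` over `O` gives a power series over `R`; the coefficients
of these series, for `f ∈ I ∩ O[X_1,…,X_n]`, generate `J` (`arcIdeal`). It vanishes on `X_r` by
construction (`eval_eq_zero_of_mem_arcIdeal`).

For the dimension it suffices to bound `dim A` for every domain quotient `A` of `R/J`. Let
`L = Frac A`, let `y_{ij} ∈ L` be the images of the `Y_{ij}`, and let `x_i = ∑_{j<r} y_{ij} t^j`, so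
that `dim A = trdeg_k A ≤ trdeg_k L`.

* The `x_i` satisfy all equations of `I` with coefficients in `O`. Hence, if `(x_i)_{i ∈ S}` is
  algebraically independent over `O`, then `K[X_i : i ∈ S]` embeds into `K[X]/I`, and `|S| ≤ m`
  (`ncard_le_of_algebraicIndepOn`).
* Choose `S` maximal with `(x_i)_{i ∈ S}` independent, and let `F ⊆ L` be the relative algebraic
  closure of `k(y_{ij} : i ∈ S)`. Every `x_i` is algebraic over `F⟦t⟧`. A power series over `L` that
  is algebraic over `F⟦t⟧` has its coefficients algebraic over `F`: for the constant coefficient,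
  reduce a primitive equation modulo `t`; then subtract it, divide by `t`, and iterate
  (`coeff_mem_range_of_isAlgebraic`). So all `y_{ij}` lie in `F`, whence `F = L` and
  `trdeg_k L ≤ r |S| ≤ r m` (`trdeg_le_of_algebraicIndepOn_ncard_le`).
-/

set_option maxSynthPendingDepth 3

/-- The Laurent series `∑_{i<r} a_i t^i` associated to a tuple of coefficients
`a ∈ ℂ^r`, i.e. the element of `ℂ((t))` corresponding to a polynomial of
degree `< r`. -/
noncomputable def seriesOfCoeffs (r : ℕ) (a : Fin r → ℂ) : LaurentSeries ℂ :=
  ∑ i : Fin r, HahnSeries.single (i : ℤ) (a i)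

/-! ### Krull dimension and transcendence degree -/

/-- The Krull dimension is bounded by the dimensions of the domain quotients. -/
theorem ringKrullDim_le_of_forall_isPrime {R : Type*} [CommRing R] {N : WithBot ℕ∞}
    (h : ∀ P : Ideal R, P.IsPrime → ringKrullDim (R ⧸ P) ≤ N) : ringKrullDim R ≤ N := by
  rw [ringKrullDim, Order.krullDim_eq_iSup_coheight]
  refine iSup_le fun p => ?_
  rw [Order.coheight_eq_krullDim_Ici]
  refine le_trans (le_of_eq ?_) (h p.asIdeal p.isPrime)
  rw [ringKrullDim_quotient]
  rfl

theorem ringKrullDim_le_of_isIntegral {R S : Type*} [CommRing R] [CommRing S] [Algebra R S]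
    [Algebra.IsIntegral R S] : ringKrullDim S ≤ ringKrullDim R :=
  Order.krullDim_le_of_strictMono (PrimeSpectrum.comap (algebraMap R S))
    fun P Q h => Ideal.IsIntegral.comap_lt_comap (R := R) (I := P.asIdeal) (J := Q.asIdeal) h

theorem ringKrullDim_le_of_isIntegral_of_injective {R S : Type*} [CommRing R] [CommRing S]
    [Algebra R S] [Algebra.IsIntegral R S] [FaithfulSMul R S] :
    ringKrullDim R ≤ ringKrullDim S := by
  refine iSup_le fun l => ?_
  obtain ⟨⟨P, hP, hl⟩⟩ := Ideal.nonempty_primesOver (S := S) (RelSeries.head l).asIdeal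
  obtain ⟨L, hL, -⟩ := Ideal.exists_ltSeries_of_hasGoingUp (S := S) l P
  rw [← hL]
  exact le_iSup (fun p : LTSeries (PrimeSpectrum S) => (p.length : WithBot ℕ∞)) L


/-- The Krull dimension of a finitely generated domain over a field is its transcendence degree:
by Noether normalization it is integral over a polynomial subring, and passing to an integral
extension changes neither number. -/
theorem ringKrullDim_eq_trdeg (k A : Type*) [Field k] [CommRing A] [IsDomain A] [Algebra k A]
    [Algebra.FiniteType k A] :
    ∃ s : ℕ, ringKrullDim A = (s : WithBot ℕ∞) ∧ Algebra.trdeg k A = (s : Cardinal) := by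
  obtain ⟨s, g, hg, hint⟩ := exists_integral_inj_algHom_of_fg k A
  algebraize [g.toRingHom]
  have : IsScalarTower k (MvPolynomial (Fin s) k) A :=
    .of_algebraMap_eq fun c => (g.commutes c).symm
  have : FaithfulSMul (MvPolynomial (Fin s) k) A :=
    (faithfulSMul_iff_algebraMap_injective _ _).mpr hg
  refine ⟨s, ?_, ?_⟩
  · rw [le_antisymm (ringKrullDim_le_of_isIntegral (R := MvPolynomial (Fin s) k) (S := A))
      (ringKrullDim_le_of_isIntegral_of_injective (R := MvPolynomial (Fin s) k) (S := A))]
    simp [ringKrullDim_eq_zero_of_field]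
  · have h := lift_trdeg_add_eq k (MvPolynomial (Fin s) k) A
    rw [MvPolynomial.trdeg_of_isDomain, trdeg_eq_zero] at h
    simpa using h.symm

/-- If a finitely generated `k`-algebra `A` contains a polynomial ring in `σ`, then
`|σ| ≤ dim A`. `A` need not be a domain: some prime of `A` contracts to zero in the polynomial
ring, and the quotient by it still contains the polynomial ring. -/
theorem natCard_le_ringKrullDim_of_injective {k A : Type*} [Field k] [CommRing A] [Algebra k A]
    [Algebra.FiniteType k A] {σ : Type*} [Finite σ] (g : MvPolynomial σ k →ₐ[k] A)
    (hg : Function.Injective g) : (Nat.card σ : WithBot ℕ∞) ≤ ringKrullDim A := by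
  obtain ⟨P, hP, hPg⟩ := Ideal.exists_comap_eq_of_mem_minimalPrimes_of_injective
    (f := (g : MvPolynomial σ k →+* A)) hg ⊥ (by simp [IsDomain.minimalPrimes_eq_singleton_bot])
  refine le_trans ?_ (ringKrullDim_quotient_le P)
  obtain ⟨s, hs, hs'⟩ := ringKrullDim_eq_trdeg k (A ⧸ P)
  have hinj : Function.Injective ((Ideal.Quotient.mkₐ k P).comp g) := by
    rw [injective_iff_map_eq_zero]
    intro a ha
    have : a ∈ P.comap (g : MvPolynomial σ k →+* A) := by
      simpa [Ideal.Quotient.eq_zero_iff_mem] using ha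
    rwa [hPg] at this
  have := lift_trdeg_le_of_injective _ hinj
  rw [MvPolynomial.trdeg_of_isDomain, hs'] at this
  rw [hs]
  have h2 : Nat.card σ ≤ s := by
    rw [← Nat.cast_card] at this
    simpa using this
  exact_mod_cast h2

/-! ### Power series algebraic over a subfield's power series -/

/-- The constant coefficient of a power series algebraic over `F⟦t⟧` is algebraic over `F`: dividing
an algebraic equation by its content makes it primitive, so that it stays nonzero modulo `t`. -/
theorem isAlgebraic_constantCoeff {F L : Type*} [Field F] [Field L] [Algebra F L]
    {x : PowerSeries L} (hx : IsAlgebraic (PowerSeries F) x) :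
    IsAlgebraic F (PowerSeries.constantCoeff x) := by
  obtain ⟨p, hp, hpx⟩ := hx
  let := UniqueFactorizationMonoid.toNormalizedGCDMonoid (PowerSeries F)
  have hinj : Function.Injective (algebraMap (PowerSeries F) (PowerSeries L)) :=
    PowerSeries.map_injective _ (algebraMap F L).injective
  refine ⟨p.primPart.map PowerSeries.constantCoeff, fun h0 => ?_, ?_⟩
  · have : Polynomial.C PowerSeries.X ∣ p.primPart := by
      rw [Polynomial.C_dvd_iff_dvd_coeff]
      intro i
      rw [PowerSeries.X_dvd_iff, ← Polynomial.coeff_map, h0, Polynomial.coeff_zero]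
    exact PowerSeries.X_prime.not_isUnit (p.isPrimitive_primPart _ this)
  · have h := Polynomial.eval₂_primPart_eq_zero hinj hp hpx
    have h' := congrArg PowerSeries.constantCoeff h
    rw [Polynomial.hom_eval₂, map_zero] at h'
    rw [Polynomial.aeval_def, Polynomial.eval₂_map, ← h']
    congr 1

/-- If `F` is algebraically closed in `L`, then a power series over `L` algebraic over `F⟦t⟧` has
all its coefficients in `F`. -/
theorem coeff_mem_range_of_isAlgebraic {F L : Type*} [Field F] [Field L] [Algebra F L]
    (hF : ∀ y : L, IsAlgebraic F y → y ∈ (algebraMap F L).range) (k : ℕ) :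
    ∀ x : PowerSeries L, IsAlgebraic (PowerSeries F) x →
      PowerSeries.coeff k x ∈ (algebraMap F L).range := by
  induction k with
  | zero => exact fun x hx => by simpa using hF _ (isAlgebraic_constantCoeff hx)
  | succ k ih =>
    -- `x = c + t y` with `y` again algebraic, and `coeff k y = coeff (k + 1) x`.
    intro x hx
    obtain ⟨c, hc⟩ := hF _ (isAlgebraic_constantCoeff hx)
    obtain ⟨y, hy⟩ : PowerSeries.X ∣ x - PowerSeries.C (PowerSeries.constantCoeff x) := by
      rw [PowerSeries.X_dvd_iff]; simp
    have hX : IsAlgebraic (PowerSeries F) (PowerSeries.X : PowerSeries L) := by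
      simpa [PowerSeries.algebraMap_apply''] using
        isAlgebraic_algebraMap (A := PowerSeries L) (PowerSeries.X : PowerSeries F)
    have hC : IsAlgebraic (PowerSeries F)
        (PowerSeries.C (PowerSeries.constantCoeff x) : PowerSeries L) := by
      rw [← hc]
      simpa [PowerSeries.algebraMap_apply''] using
        isAlgebraic_algebraMap (A := PowerSeries L) (PowerSeries.C c : PowerSeries F)
    have hya : IsAlgebraic (PowerSeries F) y :=
      hX.of_mul (mem_nonZeroDivisors_of_ne_zero PowerSeries.X_ne_zero) (hy ▸ hx.sub hC)
    have := ih y hya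
    rwa [← PowerSeries.coeff_succ_X_mul, ← hy, map_sub, PowerSeries.coeff_C,
      if_neg k.succ_ne_zero, sub_zero] at this

/-! ### Bounding the transcendence degree by a maximal independent subfamily -/

/-- The power series `∑_{j<r} a_j t^j`. -/
noncomputable def truncSeries {R : Type*} [CommSemiring R] (r : ℕ) (a : Fin r → R) :
    PowerSeries R :=
  ∑ j : Fin r, PowerSeries.C (a j) * PowerSeries.X ^ (j : ℕ)

theorem coeff_truncSeries {R : Type*} [CommSemiring R] {r : ℕ} (a : Fin r → R) (k : ℕ) :
    PowerSeries.coeff k (truncSeries r a) = if h : k < r then a ⟨k, h⟩ else 0 := by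
  simp only [truncSeries, map_sum, PowerSeries.coeff_C_mul, PowerSeries.coeff_X_pow, mul_ite,
    mul_one, mul_zero]
  split_ifs with h
  · rw [Finset.sum_eq_single ⟨k, h⟩]
    · simp
    · intro j _ hj
      rw [if_neg]
      rintro rfl
      exact hj rfl
    · simp
  · refine Finset.sum_eq_zero fun j _ => if_neg ?_
    rintro rfl
    exact h j.2

theorem map_truncSeries {R S : Type*} [CommSemiring R] [CommSemiring S] (f : R →+* S) {r : ℕ}
    (a : Fin r → R) : PowerSeries.map f (truncSeries r a) = truncSeries r (fun j => f (a j)) := by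
  simp [truncSeries]

/-- Let `L` be generated over `k` by finitely many `y_{ij}`, `j < r`, and put
`x_i = ∑_{j<r} y_{ij} t^j`. If at most `m` of the `x_i` can be algebraically independent over
`k⟦t⟧`, then `trdeg_k L ≤ r m`. -/
theorem trdeg_le_of_algebraicIndepOn_ncard_le {k L ι : Type*} [Field k] [Field L] [Algebra k L]
    [Finite ι] {r m : ℕ} (y : ι × Fin r → L) (hy : IntermediateField.adjoin k (Set.range y) = ⊤)
    (hm : ∀ S : Set ι, AlgebraicIndepOn (PowerSeries k)
      (fun i => truncSeries r fun j => y (i, j)) S → S.ncard ≤ m) :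
    Algebra.trdeg k L ≤ ((r * m : ℕ) : Cardinal) := by
  set x : ι → PowerSeries L := fun i => truncSeries r fun j => y (i, j) with hx
  have hinj : Function.Injective (algebraMap (PowerSeries k) (PowerSeries L)) :=
    PowerSeries.map_injective _ (algebraMap k L).injective
  obtain ⟨S, hS⟩ := (Set.toFinite {S : Set ι | AlgebraicIndepOn (PowerSeries k) x S}).exists_maximal
    ⟨∅, algebraicIndependent_empty_type_iff.mpr hinj⟩
  have halg : ∀ i ∉ S, IsAlgebraic (Algebra.adjoin (PowerSeries k) (x '' S)) (x i) := by
    intro i hi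
    by_contra h
    have h1 : AlgebraicIndepOn (PowerSeries k) x (insert i S) := hS.prop.insert h
    exact hi (hS.le_of_ge h1 (Set.subset_insert i S) (Set.mem_insert i S))
  -- `F` is the algebraic closure in `L` of the field generated by the coefficients of the `x i`,
  -- `i ∈ S`; the aim is `F = L`.
  set t : Set L := y '' (S ×ˢ Set.univ) with ht
  set E := IntermediateField.adjoin k t with hE
  set F := algebraicClosure E L with hF
  have hFcl : ∀ z : L, IsAlgebraic F z → z ∈ (algebraMap F L).range := fun z hz =>
    ⟨⟨z, mem_algebraicClosure_iff.mpr (hz.restrictScalars E)⟩, rfl⟩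
  have hyF : ∀ i ∈ S, ∀ j, y (i, j) ∈ F := fun i hi j =>
    algebraMap_mem F (⟨y (i, j), IntermediateField.subset_adjoin k t
      ⟨(i, j), ⟨hi, Set.mem_univ _⟩, rfl⟩⟩ : E)
  have hxF : ∀ i ∈ S, x i ∈ (PowerSeries.map (algebraMap F L)).range := fun i hi =>
    ⟨truncSeries r fun j => ⟨y (i, j), hyF i hi j⟩, map_truncSeries _ _⟩
  -- `F⟦t⟧`, as a subalgebra of `L⟦t⟧`.
  let T : Subalgebra (PowerSeries k) (PowerSeries L) :=
    { (PowerSeries.map (algebraMap F L)).range with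
      algebraMap_mem' := fun c => ⟨PowerSeries.map (algebraMap k F) c, by
        ext; simp [PowerSeries.algebraMap_apply'']; rfl⟩ }
  have hT : Algebra.adjoin (PowerSeries k) (x '' S) ≤ T := by
    refine Algebra.adjoin_le ?_
    rintro _ ⟨i, hi, rfl⟩
    exact hxF i hi
  have hxalg : ∀ i, IsAlgebraic (PowerSeries F) (x i) := by
    intro i
    by_cases hi : i ∈ S
    · obtain ⟨z, hz⟩ := hxF i hi
      rw [← hz]
      exact isAlgebraic_algebraMap z
    · have h1 := (halg i hi).tower_top_of_subalgebra_le hT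
      refine h1.of_ringHom_of_comp_eq (S := T) (B := PowerSeries L)
        (PowerSeries.map (algebraMap F L)).rangeRestrict
        (RingHom.id (PowerSeries L)) (RingHom.rangeRestrict_surjective _)
        Function.injective_id ?_
      rfl
  have hFtop : F = ⊤ := by
    have h1 : IntermediateField.adjoin k (Set.range y) ≤ F.restrictScalars k := by
      rw [IntermediateField.adjoin_le_iff]
      rintro _ ⟨⟨i, j⟩, rfl⟩
      obtain ⟨z, hz⟩ := coeff_mem_range_of_isAlgebraic hFcl j (x i) (hxalg i)
      rw [hx, coeff_truncSeries, dif_pos j.2] at hz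
      change y (i, j) ∈ F
      rw [← hz]
      exact z.2
    rw [hy] at h1
    exact eq_top_iff.mpr fun z _ => h1 trivial
  -- Hence `L` is algebraic over the at most `r * S.ncard` elements of `t`.
  have hLE : Algebra.IsAlgebraic E L :=
    ⟨fun z => mem_algebraicClosure_iff.mp (by rw [← hF, hFtop]; trivial)⟩
  have hLA : Algebra.IsAlgebraic (Algebra.adjoin k t) L := by
    open scoped IntermediateField.algebraAdjoinAdjoin in
    exact ⟨fun z =>
      (IsFractionRing.isAlgebraic_iff (Algebra.adjoin k t) E L).mpr (hLE.isAlgebraic z)⟩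
  refine (Algebra.IsAlgebraic.trdeg_le_cardinalMk k t).trans ?_
  have htf : t.Finite := Set.toFinite t
  have : t.ncard ≤ r * m := by
    calc t.ncard ≤ (S ×ˢ (Set.univ : Set (Fin r))).ncard := Set.ncard_image_le (Set.toFinite _)
      _ = S.ncard * r := by rw [Set.ncard_prod]; simp
      _ ≤ r * m := by rw [mul_comm]; exact Nat.mul_le_mul_left r (hm S hS.prop)
  rw [← Set.cast_ncard htf]
  exact_mod_cast this

/-! ### The ideal of the equations of `X_r` -/

/-- Substitution of the generic tuple `(∑_{j<r} Y_{ij} t^j)_i` into polynomials over `k⟦t⟧`; the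
result is a power series in `t` over `k[Y_{ij}]`. -/
noncomputable def genericArc (k : Type*) [CommRing k] (ι : Type*) (r : ℕ) :
    MvPolynomial ι (PowerSeries k) →+* PowerSeries (MvPolynomial (ι × Fin r) k) :=
  MvPolynomial.eval₂Hom (PowerSeries.map MvPolynomial.C)
    fun i => truncSeries r fun j => MvPolynomial.X (i, j)

/-- Specializing the generic tuple along `ψ`. -/
theorem map_genericArc {k B ι : Type*} [CommRing k] [CommRing B] [Algebra k B] {r : ℕ}
    (ψ : MvPolynomial (ι × Fin r) k →ₐ[k] B) (f : MvPolynomial ι (PowerSeries k)) :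
    PowerSeries.map (ψ : MvPolynomial (ι × Fin r) k →+* B) (genericArc k ι r f) =
      MvPolynomial.aeval (fun i => truncSeries r fun j => ψ (MvPolynomial.X (i, j))) f := by
  rw [genericArc, MvPolynomial.coe_eval₂Hom, MvPolynomial.hom_eval₂, MvPolynomial.aeval_def]
  congr 1
  · ext a : 1
    ext d
    simp [PowerSeries.algebraMap_apply'']
  · funext i
    simp [map_truncSeries]

/-- The ideal of `k[Y_{ij}]` generated by all `t`-coefficients of `f(∑_{j<r} Y_{ij} t^j)`, where `f`
runs over the elements of `I` with coefficients in `k⟦t⟧`. -/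
noncomputable def arcIdeal {k ι : Type*} [Field k] (r : ℕ)
    (I : Ideal (MvPolynomial ι (LaurentSeries k))) : Ideal (MvPolynomial (ι × Fin r) k) :=
  Ideal.span {c | ∃ f d, MvPolynomial.map (HahnSeries.ofPowerSeries ℤ k) f ∈ I ∧
    c = PowerSeries.coeff d (genericArc k ι r f)}

/-- A `B`-point `ψ` of `arcIdeal r I` gives a tuple of power series over `B` satisfying every equation
of `I` with coefficients in `k⟦t⟧`. -/
theorem aeval_truncSeries_eq_zero {k B ι : Type*} [Field k] [CommRing B] [Algebra k B] {r : ℕ}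
    {I : Ideal (MvPolynomial ι (LaurentSeries k))} (ψ : MvPolynomial (ι × Fin r) k →ₐ[k] B)
    (hψ : ∀ c ∈ arcIdeal r I, ψ c = 0) {f : MvPolynomial ι (PowerSeries k)}
    (hf : MvPolynomial.map (HahnSeries.ofPowerSeries ℤ k) f ∈ I) :
    MvPolynomial.aeval (fun i => truncSeries r fun j => ψ (MvPolynomial.X (i, j))) f = 0 := by
  rw [← map_genericArc]
  ext d
  simpa using hψ _ (Ideal.subset_span ⟨f, d, hf, rfl⟩)

theorem ofPowerSeries_truncSeries {r : ℕ} (a : Fin r → ℂ) :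
    HahnSeries.ofPowerSeries ℤ ℂ (truncSeries r a) = seriesOfCoeffs r a := by
  simp only [truncSeries, seriesOfCoeffs, map_sum, map_mul, HahnSeries.ofPowerSeries_C,
    HahnSeries.ofPowerSeries_X_pow]
  refine Finset.sum_congr rfl fun j _ => ?_
  simp [HahnSeries.C_apply]

theorem eval_eq_zero_of_mem_arcIdeal {n r : ℕ} {I : Ideal (MvPolynomial (Fin n) (LaurentSeries ℂ))}
    (a : Fin n → Fin r → ℂ)
    (ha : ∀ f ∈ I, MvPolynomial.eval (fun i => seriesOfCoeffs r (a i)) f = 0)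
    {g : MvPolynomial (Fin n × Fin r) ℂ} (hg : g ∈ arcIdeal r I) :
    MvPolynomial.eval (fun q => a q.1 q.2) g = 0 := by
  let ψ : MvPolynomial (Fin n × Fin r) ℂ →ₐ[ℂ] ℂ := MvPolynomial.aeval fun q => a q.1 q.2
  suffices h : arcIdeal r I ≤ RingHom.ker ψ by
    simpa [ψ, MvPolynomial.aeval_eq_eval] using h hg
  refine Ideal.span_le.mpr ?_
  rintro _ ⟨f, d, hf, rfl⟩
  have h1 := ha _ hf
  have h2 : PowerSeries.map (ψ : MvPolynomial (Fin n × Fin r) ℂ →+* ℂ)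
      (genericArc ℂ (Fin n) r f) = 0 := by
    apply HahnSeries.ofPowerSeries_injective (Γ := ℤ)
    rw [map_zero, ← h1, MvPolynomial.eval_map, map_genericArc, MvPolynomial.aeval_def,
      MvPolynomial.hom_eval₂]
    simp only [ψ, MvPolynomial.aeval_X, ofPowerSeries_truncSeries]
    congr 1
  simpa [ψ] using congrArg (PowerSeries.coeff d) h2

/-! ### The dimension bound -/

/-- Clearing denominators: a power of `t` times a polynomial over `k((t))` has coefficients in
`k⟦t⟧`. -/
theorem exists_C_mul_eq_map {k σ : Type*} [Field k] (g : MvPolynomial σ (LaurentSeries k)) :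
    ∃ (N : ℕ) (f : MvPolynomial σ (PowerSeries k)),
      MvPolynomial.map (HahnSeries.ofPowerSeries ℤ k) f =
        MvPolynomial.C (HahnSeries.ofPowerSeries ℤ k (PowerSeries.X ^ N)) * g := by
  let : Algebra (MvPolynomial σ (PowerSeries k)) (MvPolynomial σ (LaurentSeries k)) :=
    MvPolynomial.algebraMvPolynomial
  have := MvPolynomial.isLocalization (σ := σ) (Submonoid.powers (PowerSeries.X : PowerSeries k))
    (LaurentSeries k)
  obtain ⟨⟨f, ⟨_, ⟨_, ⟨N, rfl⟩, rfl⟩⟩⟩, h⟩ := IsLocalization.surj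
    (Submonoid.map (MvPolynomial.C (σ := σ)) (Submonoid.powers (PowerSeries.X : PowerSeries k))) g
  refine ⟨N, f, ?_⟩
  rw [mul_comm]
  simp only [MvPolynomial.algebraMap_def, MvPolynomial.map_C] at h
  exact h.symm

/-- Any subfamily, algebraically independent over `k⟦t⟧`, of the tuple given by an `L`-point of
`arcIdeal r I` has at most `dim K[X]/I` members: its variables remain independent modulo `I`. -/
theorem ncard_le_of_algebraicIndepOn {n r m : ℕ} {k L : Type*} [Field k] [Field L] [Algebra k L]
    {I : Ideal (MvPolynomial (Fin n) (LaurentSeries k))}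
    (hdim : ringKrullDim (MvPolynomial (Fin n) (LaurentSeries k) ⧸ I) = ((m : ℕ∞) : WithBot ℕ∞))
    (ψ : MvPolynomial (Fin n × Fin r) k →ₐ[k] L) (hψ : ∀ c ∈ arcIdeal r I, ψ c = 0)
    {S : Set (Fin n)} (hS : AlgebraicIndepOn (PowerSeries k)
      (fun i => truncSeries r fun j => ψ (MvPolynomial.X (i, j))) S) : S.ncard ≤ m := by
  let g : MvPolynomial S (LaurentSeries k) →ₐ[LaurentSeries k]
      MvPolynomial (Fin n) (LaurentSeries k) ⧸ I :=
    (Ideal.Quotient.mkₐ _ I).comp (MvPolynomial.rename (↑))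
  have hg : Function.Injective g := by
    rw [injective_iff_map_eq_zero]
    intro p hp
    obtain ⟨N, f, hf⟩ := exists_C_mul_eq_map p
    have hfI : MvPolynomial.map (HahnSeries.ofPowerSeries ℤ k)
        (MvPolynomial.rename ((↑) : S → Fin n) f) ∈ I := by
      rw [MvPolynomial.map_rename, hf, map_mul]
      refine I.mul_mem_left _ ?_
      simpa [g, Ideal.Quotient.eq_zero_iff_mem] using hp
    have h0 := aeval_truncSeries_eq_zero ψ hψ hfI
    rw [MvPolynomial.aeval_rename] at h0
    have hf0 : f = 0 := (injective_iff_map_eq_zero _).mp hS f h0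
    rw [hf0, map_zero, eq_comm, mul_eq_zero] at hf
    refine hf.resolve_left ?_
    rw [MvPolynomial.C_eq_zero, map_eq_zero_iff _ HahnSeries.ofPowerSeries_injective]
    exact pow_ne_zero N PowerSeries.X_ne_zero
  have := natCard_le_ringKrullDim_of_injective g hg
  rw [hdim, Nat.card_coe_set_eq] at this
  exact_mod_cast this

theorem ringKrullDim_quotient_arcIdeal_le {n r m : ℕ} {k : Type*} [Field k]
    {I : Ideal (MvPolynomial (Fin n) (LaurentSeries k))}
    (hdim : ringKrullDim (MvPolynomial (Fin n) (LaurentSeries k) ⧸ I)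
      = ((m : ℕ∞) : WithBot ℕ∞)) :
    ringKrullDim (MvPolynomial (Fin n × Fin r) k ⧸ arcIdeal r I)
      ≤ (((r * m : ℕ) : ℕ∞) : WithBot ℕ∞) := by
  refine ringKrullDim_le_of_forall_isPrime fun P hP => ?_
  let A := (MvPolynomial (Fin n × Fin r) k ⧸ arcIdeal r I) ⧸ P
  let L := FractionRing A
  obtain ⟨s, hs, hs'⟩ := ringKrullDim_eq_trdeg k A
  let π : MvPolynomial (Fin n × Fin r) k →ₐ[k] A :=
    (Ideal.Quotient.mkₐ k P).comp (Ideal.Quotient.mkₐ k (arcIdeal r I))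
  have hπ : Function.Surjective π :=
    (Ideal.Quotient.mk_surjective).comp Ideal.Quotient.mk_surjective
  let ψ : MvPolynomial (Fin n × Fin r) k →ₐ[k] L := (IsScalarTower.toAlgHom k A L).comp π
  have hψ : ∀ c ∈ arcIdeal r I, ψ c = 0 := fun c hc => by
    simp [ψ, π, Ideal.Quotient.eq_zero_iff_mem.mpr hc]
  let y : Fin n × Fin r → L := fun q => ψ (MvPolynomial.X q)
  have hyA : ∀ z : A, algebraMap A L z ∈ IntermediateField.adjoin k (Set.range y) := by
    intro z
    obtain ⟨p, rfl⟩ := hπ z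
    have : ψ p = MvPolynomial.aeval y p := by
      rw [show ψ = MvPolynomial.aeval y from MvPolynomial.algHom_ext fun q => by simp [y]]
    change ψ p ∈ _
    rw [this]
    exact IntermediateField.algebra_adjoin_le_adjoin k _
      (Algebra.adjoin_range_eq_range_aeval k y ▸ ⟨p, rfl⟩)
  have hy : IntermediateField.adjoin k (Set.range y) = ⊤ := by
    refine eq_top_iff.mpr fun z _ => ?_
    obtain ⟨a, b, -, rfl⟩ := IsFractionRing.div_surjective (A := A) z
    exact div_mem (hyA a) (hyA b)
  have h1 := trdeg_le_of_algebraicIndepOn_ncard_le y hy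
    fun S hS => ncard_le_of_algebraicIndepOn hdim ψ hψ hS
  have h2 := (trdeg_le_of_injective (IsScalarTower.toAlgHom k A L)
    (IsFractionRing.injective A L)).trans h1
  change ringKrullDim A ≤ _
  rw [hs]
  rw [hs'] at h2
  exact_mod_cast h2

/-- The trivial estimate (Lemma `trivest` of the paper): if `X ⊆ 𝔸^n` over
`ℂ((t))` is the zero set of an ideal `I` with `dim K[X]/I = m`, then for every
`r > 0` the Zariski closure of `X_r = X(K) ∩ (ℂ[t]_{<r})^n` in `ℂ^{nr}` has
dimension at most `r·m`: there is an ideal `J` of `ℂ[Y_1,…,Y_{nr}]` vanishing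
on `X_r` whose quotient ring has Krull dimension at most `r·m`. -/
theorem trivial_estimate (n m : ℕ) (hn : 1 ≤ n)
    (I : Ideal (MvPolynomial (Fin n) (LaurentSeries ℂ)))
    (hdim : ringKrullDim (MvPolynomial (Fin n) (LaurentSeries ℂ) ⧸ I)
      = ((m : ℕ∞) : WithBot ℕ∞)) :
    ∀ r : ℕ, 0 < r →
      ∃ J : Ideal (MvPolynomial (Fin n × Fin r) ℂ),
        (∀ a : Fin n → Fin r → ℂ,
          (∀ f ∈ I, MvPolynomial.eval (fun i => seriesOfCoeffs r (a i)) f = 0) →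
          ∀ g ∈ J, MvPolynomial.eval (fun q => a q.1 q.2) g = 0) ∧
        ringKrullDim (MvPolynomial (Fin n × Fin r) ℂ ⧸ J)
          ≤ (((r * m : ℕ) : ℕ∞) : WithBot ℕ∞) := by
  intro r _
  exact ⟨arcIdeal r I, fun a ha g hg => eval_eq_zero_of_mem_arcIdeal a ha hg,
    ringKrullDim_quotient_arcIdeal_le hdim⟩
end
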